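/- arXiv:0911.4683 — 2 statements merged into one kernel-verified Lean document; each statement's English description precedes it below -/
import Mathlib

section
/- Let μ be a Borel measure on ℝ with μ({0}) = 0 and ∫_ℝ min(1,u²) μ(du) < ∞, satisfying μ((0,∞)) > 0 and ∫_{|u|≥1} e^{Cu} μ(du) < ∞ for every C ∈ ℝ. Let I ⊆ ℝ be an interval and f : I → ℝ a bounded measurable function with 0 < ∫_I f(s)² ds < ∞, and assume there is a compact interval [a,b] ⊆ I on which f is positive and continuously differentiable with nonvanishing derivative. Then there exist q > 0 and ϑ > 0 such that for every ε > 0 and every z with |z| ≥ ε one has Θ(z,[q,∞)) ≥ ϑ · min(ε², 1). -/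
open MeasureTheory Filter Set

/-- `Θ(z,A) = ∫_I ∫_ℝ 1_{f(s)u ∈ A} (1 − cos(f(s)zu)) μ(du) ds`. -/
noncomputable def kernelTheta (μ : Measure ℝ) (I : Set ℝ) (f : ℝ → ℝ) (z : ℝ) (A : Set ℝ) : ℝ :=
  ∫ s in I, ∫ u, A.indicator (fun _ => (1 : ℝ)) (f s * u) * (1 - Real.cos (f s * z * u)) ∂μ

/-!
Restrict `Θ` to a rectangle `[a, b] × [c, ∞)` with `0 < μ [c, ∞) < ∞`; there `f(s) u` is at least
`q = c · min f`, so the indicator is `1`. By Fubini it then suffices to bound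
`∫ₐᵇ (1 - cos (w f(s))) ds` from below, uniformly in `w = z u`. For a `K`-Lipschitz `f` the
substitution `x = f(s)` bounds it below by `K⁻¹ |∫ (1 - cos (w x)) dx|`, the integral being taken
from `f(a)` to `f(b)`. With `L = f(b) - f(a)` the latter is at least `|L| (1 - |sinc (w L / 2)|)`
in absolute value, and `1 - |sinc x|` is bounded below by a multiple of `min 1 x²`.
-/

open scoped NNReal Topology

lemma min_one_sq_mul_min_one_sq_le (x y : ℝ) :
    min 1 (x ^ 2) * min 1 (y ^ 2) ≤ min 1 ((x * y) ^ 2) := by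
  refine le_min ?_ ?_
  · exact mul_le_one₀ (min_le_left _ _) (by positivity) (min_le_left _ _)
  · rw [mul_pow]
    gcongr <;> exact min_le_right _ _

section Oscillation

lemma abs_sin_le_sub_cube_of_le_one {x : ℝ} (hx : |x| ≤ 1) :
    |Real.sin x| ≤ |x| - |x| ^ 3 / 8 := by
  have taylor : |Real.sin x - (x - x ^ 3 / 6)| ≤ |x| ^ 5 / 100 := Real.sin_bound hx
  have polynomial : |x - x ^ 3 / 6| = |x| - |x| ^ 3 / 6 := by
    have factor_nonneg : 0 ≤ 1 - x ^ 2 / 6 := by nlinarith [sq_abs x, abs_nonneg x]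
    rw [show x - x ^ 3 / 6 = x * (1 - x ^ 2 / 6) by ring, abs_mul, abs_of_nonneg factor_nonneg,
      ← sq_abs]
    ring
  have remainder : |x| ^ 5 ≤ |x| ^ 3 := pow_le_pow_of_le_one (abs_nonneg x) hx (by norm_num)
  have cube_nonneg : 0 ≤ |x| ^ 3 := by positivity
  linarith [abs_sub_abs_le_abs_sub (Real.sin x) (x - x ^ 3 / 6)]

lemma abs_sin_le_mul_of_one_le {x : ℝ} (hx : 1 ≤ |x|) : |Real.sin x| ≤ 15 / 16 * |x| := by
  rcases le_total 2 |x| with two_le | le_two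
  · linarith [Real.abs_sin_le_one x]
  · have sin_one : |Real.sin 1| ≤ 7 / 8 := by
      have := abs_sin_le_sub_cube_of_le_one abs_one.le
      norm_num at this ⊢
      exact this
    have sin_abs : |Real.sin (|x|)| = |Real.sin x| := by
      rcases abs_choice x with h | h <;> simp [h]
    have lipschitz : |Real.sin (|x|) - Real.sin 1| ≤ |x| - 1 := by
      simpa [abs_of_nonneg (sub_nonneg.2 hx)] using Real.abs_sin_sub_sin_le (|x|) 1
    linarith [abs_sub_abs_le_abs_sub (Real.sin (|x|)) (Real.sin 1)]

lemma min_one_sq_div_le_one_sub_abs_sinc (x : ℝ) :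
    min 1 (x ^ 2) / 16 ≤ 1 - |Real.sinc x| := by
  rcases eq_or_ne x 0 with rfl | hx
  · simp
  have x_abs_pos : 0 < |x| := abs_pos.2 hx
  rw [Real.sinc_of_ne_zero hx, abs_div, le_sub_comm, div_le_iff₀ x_abs_pos]
  rcases le_total |x| 1 with le_one | one_le
  · have min_mul_le : min 1 (x ^ 2) * |x| ≤ |x| ^ 3 := by
      rw [pow_succ |x|, sq_abs]
      gcongr
      exact min_le_right _ _
    linarith [abs_sin_le_sub_cube_of_le_one le_one, pow_pos x_abs_pos 3]
  · have min_mul_le : min 1 (x ^ 2) * |x| ≤ 1 * |x| := by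
      gcongr
      exact min_le_left _ _
    linarith [abs_sin_le_mul_of_one_le one_le]

lemma integral_one_sub_cos_mul (w α β : ℝ) :
    ∫ x in α..β, (1 - Real.cos (w * x)) =
      (β - α) * (1 - Real.cos (w * ((α + β) / 2)) * Real.sinc (w * (β - α) / 2)) := by
  rcases eq_or_ne w 0 with rfl | hw
  · simp
  rcases eq_or_ne α β with rfl | hαβ
  · simp
  have sub_ne : β - α ≠ 0 := sub_ne_zero.2 hαβ.symm
  have half_ne : w * (β - α) / 2 ≠ 0 := by positivity
  rw [intervalIntegral.integral_sub (by simp) (Continuous.intervalIntegrable (by fun_prop) _ _),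
    intervalIntegral.integral_const, intervalIntegral.integral_comp_mul_left _ hw, integral_cos,
    Real.sin_sub_sin, Real.sinc_of_ne_zero half_ne, smul_eq_mul, smul_eq_mul,
    show (w * β + w * α) / 2 = w * ((α + β) / 2) by ring, ← mul_sub]
  field_simp

lemma abs_mul_min_le_abs_integral_one_sub_cos (w α β : ℝ) :
    |β - α| * (min 1 ((w * (β - α) / 2) ^ 2) / 16) ≤
      |∫ x in α..β, (1 - Real.cos (w * x))| := by
  rw [integral_one_sub_cos_mul, abs_mul]
  gcongr
  set sinc := Real.sinc (w * (β - α) / 2)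
  set cos := Real.cos (w * ((α + β) / 2))
  calc min 1 ((w * (β - α) / 2) ^ 2) / 16
      ≤ 1 - |sinc| := min_one_sq_div_le_one_sub_abs_sinc _
    _ ≤ 1 - |cos * sinc| := by
        rw [abs_mul]
        gcongr
        exact mul_le_of_le_one_left (abs_nonneg _) (Real.abs_cos_le_one _)
    _ ≤ |1 - cos * sinc| := by simpa using abs_sub_abs_le_abs_sub 1 (cos * sinc)

variable {f g : ℝ → ℝ} {a b : ℝ} {K : ℝ≥0}

lemma integral_comp_mul_deriv_of_lipschitzOnWith
    (hf : LipschitzOnWith K f (uIcc a b)) (hg : Continuous g) :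
    ∫ s in a..b, g (f s) * deriv f s = ∫ x in f a..f b, g x := by
  set G : ℝ → ℝ := fun y => ∫ x in f a..y, g x
  have hG (y : ℝ) : HasDerivAt G (g y) y := hg.integral_hasStrictDerivAt (f a) y |>.hasDerivAt
  have contDiff_G : ContDiff ℝ 1 G := by
    refine contDiff_one_iff_deriv.2 ⟨fun y => (hG y).differentiableAt, ?_⟩
    rwa [show deriv G = g from funext fun y => (hG y).deriv]
  obtain ⟨C, lipschitz_G⟩ : ∃ C, LipschitzOnWith C G (f '' uIcc a b) :=
    contDiff_G.locallyLipschitz.locallyLipschitzOn.exists_lipschitzOnWith_of_compact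
      (isCompact_uIcc.image_of_continuousOn hf.continuousOn)
  have absCont : AbsolutelyContinuousOnInterval (G ∘ f) a b :=
    (lipschitz_G.comp hf (mapsTo_image f _)).absolutelyContinuousOnInterval
  calc ∫ s in a..b, g (f s) * deriv f s
      = ∫ s in a..b, deriv (G ∘ f) s := by
        refine intervalIntegral.integral_congr_ae ?_
        filter_upwards [hf.absolutelyContinuousOnInterval.ae_differentiableAt] with s hs hs_mem
        exact ((hG (f s)).comp s (hs (uIoc_subset_uIcc hs_mem)).hasDerivAt).deriv.symm
    _ = ∫ x in f a..f b, g x := by simp [absCont.integral_deriv_eq_sub, G]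

lemma abs_integral_le_mul_integral_comp_of_lipschitzOnWith (hab : a ≤ b)
    (hf : LipschitzOnWith K f (Icc a b)) (hg : Continuous g) (hg_nonneg : ∀ x, 0 ≤ g x) :
    |∫ x in f a..f b, g x| ≤ K * ∫ s in Icc a b, g (f s) := by
  rw [← uIcc_of_le hab] at hf
  rw [← integral_comp_mul_deriv_of_lipschitzOnWith hf hg, integral_Icc_eq_integral_Ioc,
    ← intervalIntegral.integral_of_le hab, ← intervalIntegral.integral_const_mul,
    ← Real.norm_eq_abs]
  have hgf : ContinuousOn (fun s => K * g (f s)) (uIcc a b) :=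
    continuousOn_const.mul (hg.comp_continuousOn hf.continuousOn)
  refine intervalIntegral.norm_integral_le_of_norm_le hab ?_ hgf.intervalIntegrable
  filter_upwards [Measure.ae_ne volume b] with s hsb hs
  have mem_nhds : uIcc a b ∈ 𝓝 s := by
    rw [uIcc_of_le hab]
    exact Icc_mem_nhds hs.1 (lt_of_le_of_ne hs.2 hsb)
  rw [norm_mul, Real.norm_of_nonneg (hg_nonneg _), mul_comm]
  gcongr
  · exact hg_nonneg _
  · exact norm_deriv_le_of_lipschitzOn mem_nhds hf

theorem abs_sub_mul_min_le_mul_integral_one_sub_cos (hab : a ≤ b)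
    (hf : LipschitzOnWith K f (Icc a b)) (w : ℝ) :
    |f b - f a| * (min 1 ((w * (f b - f a) / 2) ^ 2) / 16) ≤
      K * ∫ s in Icc a b, (1 - Real.cos (w * f s)) :=
  (abs_mul_min_le_abs_integral_one_sub_cos w (f a) (f b)).trans <|
    abs_integral_le_mul_integral_comp_of_lipschitzOnWith hab hf (by fun_prop)
      fun x => sub_nonneg.2 (Real.cos_le_one _)

lemma exists_pos_mul_min_le_integral_one_sub_cos (hab : a ≤ b)
    (hf : LipschitzOnWith K f (Icc a b)) (hne : f a ≠ f b) :
    ∃ κ > 0, ∀ w : ℝ, κ * min 1 (w ^ 2) ≤ ∫ s in Icc a b, (1 - Real.cos (w * f s)) := by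
  set L := f b - f a
  have : L ≠ 0 := sub_ne_zero.2 hne.symm
  have K_pos : 0 < (K : ℝ) := by
    have := hf.dist_le_mul b (right_mem_Icc.2 hab) a (left_mem_Icc.2 hab)
    exact pos_of_mul_pos_left ((dist_pos.2 hne.symm).trans_le this) dist_nonneg
  refine ⟨|L| * min 1 ((L / 2) ^ 2) / (16 * K), by positivity, fun w => ?_⟩
  rw [div_mul_eq_mul_div, div_le_iff₀ (by positivity)]
  calc |L| * min 1 ((L / 2) ^ 2) * min 1 (w ^ 2)
      = |L| * (min 1 (w ^ 2) * min 1 ((L / 2) ^ 2)) := by ring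
    _ ≤ |L| * min 1 ((w * L / 2) ^ 2) := by
        rw [mul_div_assoc]
        gcongr
        exact min_one_sq_mul_min_one_sq_le w (L / 2)
    _ ≤ (∫ s in Icc a b, (1 - Real.cos (w * f s))) * (16 * K) := by
        linarith [abs_sub_mul_min_le_mul_integral_one_sub_cos hab hf w]

end Oscillation

section Measure

-- `μ` need not be σ-finite: it may have an infinite atom at `x₀`, which is still s-finite.
lemma sFinite_of_integrable_of_ne_zero {α E : Type*} [MeasurableSpace α]
    [MeasurableSingletonClass α] [NormedAddCommGroup E] {μ : Measure α} {g : α → E} {x₀ : α}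
    (hg : Integrable g μ) (hg_ne : ∀ x, x ≠ x₀ → g x ≠ 0) : SFinite μ := by
  obtain ⟨t, ht, hg_zero, _⟩ := hg.aefinStronglyMeasurable.exists_set_sigmaFinite
  have restrict_compl : μ.restrict tᶜ = μ.restrict tᶜ {x₀} • Measure.dirac x₀ := by
    rw [← Measure.restrict_singleton, Measure.restrict_eq_self_of_ae_mem (s := {x₀})]
    filter_upwards [hg_zero] with x hx
    exact not_imp_not.1 (hg_ne x) hx
  rw [← Measure.restrict_add_restrict_compl (μ := μ) ht, restrict_compl]
  infer_instance

lemma exists_gt_measure_Ici_pos {α : Type*} [MeasurableSpace α]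
    [ConditionallyCompleteLinearOrder α] [DenselyOrdered α] [NoMaxOrder α] [TopologicalSpace α]
    [OrderTopology α] [FirstCountableTopology α] {μ : Measure α} {x : α} (hμ : 0 < μ (Ioi x)) :
    ∃ c > x, 0 < μ (Ici c) := by
  obtain ⟨c, -, lt_c, c_tendsto⟩ := exists_seq_strictAnti_tendsto x
  rw [← iUnion_Ici_eq_Ioi_of_lt_of_tendsto lt_c c_tendsto] at hμ
  obtain ⟨n, hn⟩ := exists_measure_pos_of_not_measure_iUnion_null hμ.ne'
  exact ⟨c n, lt_c n, hn⟩

lemma measure_Ici_lt_top_of_integrable_sq {μ : Measure ℝ} (hμ : Integrable (fun u => u ^ 2) μ)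
    {c : ℝ} (hc : 0 < c) : μ (Ici c) < ⊤ := by
  refine (measure_mono fun u hu => ?_).trans_lt
    (hμ.measure_norm_ge_lt_top (ε := c ^ 2) (by positivity))
  simpa using pow_le_pow_left₀ hc.le hu 2

lemma integrable_sq_of_integrable_exp {μ : Measure ℝ} {t : ℝ}
    (hμ : Integrable (fun u : ℝ => min 1 (u ^ 2)) μ) (ht : t ≠ 0)
    (hexp : IntegrableOn (fun u : ℝ => Real.exp (t * u)) {u : ℝ | 1 ≤ |u|} μ)
    (hexp_neg : IntegrableOn (fun u : ℝ => Real.exp (-t * u)) {u : ℝ | 1 ≤ |u|} μ) :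
    Integrable (fun u : ℝ => u ^ 2) μ := by
  have hmeas : MeasurableSet {u : ℝ | 1 ≤ |u|} := measurableSet_le (by fun_prop) (by fun_prop)
  have large : IntegrableOn (fun u : ℝ => u ^ 2) {u : ℝ | 1 ≤ |u|} μ :=
    ProbabilityTheory.integrable_pow_of_integrable_exp_mul ht hexp hexp_neg 2
  have small : IntegrableOn (fun u : ℝ => u ^ 2) {u : ℝ | 1 ≤ |u|}ᶜ μ := by
    refine hμ.integrableOn.congr_fun (fun u hu => min_eq_right ?_) hmeas.compl
    exact (sq_le_one_iff_abs_le_one u).2 (not_le.1 (notMem_ofPred_iff.1 hu)).le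
  rw [← integrableOn_univ, ← union_compl_self {u : ℝ | 1 ≤ |u|}]
  exact large.union small

end Measure

section Theta

/-- The integrand of `kernelTheta` as a function on the product space of pairs `(s, u)`. -/
noncomputable def kernelThetaIntegrand (f : ℝ → ℝ) (z : ℝ) (A : Set ℝ) (p : ℝ × ℝ) : ℝ :=
  A.indicator (fun _ => (1 : ℝ)) (f p.1 * p.2) * (1 - Real.cos (f p.1 * z * p.2))

variable {μ : Measure ℝ} {I : Set ℝ} {f : ℝ → ℝ} {z : ℝ} {A : Set ℝ}

lemma kernelThetaIntegrand_nonneg (p : ℝ × ℝ) : 0 ≤ kernelThetaIntegrand f z A p :=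
  mul_nonneg (indicator_nonneg (fun _ _ => zero_le_one) _) (sub_nonneg.2 (Real.cos_le_one _))

lemma kernelThetaIntegrand_le (p : ℝ × ℝ) :
    kernelThetaIntegrand f z A p ≤ z ^ 2 / 2 * (f p.1 ^ 2 * p.2 ^ 2) :=
  calc kernelThetaIntegrand f z A p
      ≤ 1 - Real.cos (f p.1 * z * p.2) :=
        mul_le_of_le_one_left (sub_nonneg.2 (Real.cos_le_one _))
          (indicator_le_self' (fun _ _ => zero_le_one) _)
    _ ≤ (f p.1 * z * p.2) ^ 2 / 2 := by
        linarith [Real.one_sub_sq_div_two_le_cos (x := f p.1 * z * p.2)]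
    _ = z ^ 2 / 2 * (f p.1 ^ 2 * p.2 ^ 2) := by ring

lemma measurable_kernelThetaIntegrand (hf : Measurable f) (hA : MeasurableSet A) :
    Measurable (kernelThetaIntegrand f z A) := by
  have : Measurable (A.indicator fun _ => (1 : ℝ)) := measurable_const.indicator hA
  unfold kernelThetaIntegrand
  fun_prop

lemma integrable_kernelThetaIntegrand [SFinite μ] (hμ : Integrable (fun u => u ^ 2) μ)
    (hf : Measurable f) (hf_sq : IntegrableOn (fun s => f s ^ 2) I) (hA : MeasurableSet A) :
    Integrable (kernelThetaIntegrand f z A) ((volume.restrict I).prod μ) := by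
  refine ((hf_sq.mul_prod hμ).const_mul (z ^ 2 / 2)).mono'
    (measurable_kernelThetaIntegrand hf hA).aestronglyMeasurable (ae_of_all _ fun p => ?_)
  rw [Real.norm_of_nonneg (kernelThetaIntegrand_nonneg p)]
  exact kernelThetaIntegrand_le p

theorem mul_measureReal_le_kernelTheta (hμ : Integrable (fun u => u ^ 2) μ)
    (hf : Measurable f) (hf_sq : IntegrableOn (fun s => f s ^ 2) I) (hA : MeasurableSet A)
    {S U : Set ℝ} (hS : MeasurableSet S) (hSI : S ⊆ I) (hU : MeasurableSet U) (hμU : μ U ≠ ⊤)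
    (hSU : ∀ s ∈ S, ∀ u ∈ U, f s * u ∈ A) {δ : ℝ}
    (hδ : ∀ u ∈ U, δ ≤ ∫ s in S, (1 - Real.cos (z * u * f s))) :
    δ * μ.real U ≤ kernelTheta μ I f z A := by
  have : SFinite μ := sFinite_of_integrable_of_ne_zero hμ fun u => pow_ne_zero 2
  set F := kernelThetaIntegrand f z A
  have hF : Integrable F ((volume.restrict I).prod μ) :=
    integrable_kernelThetaIntegrand hμ hf hf_sq hA
  have restrict_rectangle : ((volume.restrict I).prod μ).restrict (S ×ˢ U) =
      (volume.restrict S).prod (μ.restrict U) := by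
    rw [← Measure.prod_restrict, Measure.restrict_restrict hS, inter_eq_left.2 hSI]
  have hF_rectangle : Integrable F ((volume.restrict S).prod (μ.restrict U)) :=
    restrict_rectangle ▸ hF.restrict
  have δ_le (u : ℝ) (hu : u ∈ U) : δ ≤ ∫ s in S, F (s, u) := by
    refine (hδ u hu).trans_eq (setIntegral_congr_fun hS fun s hs => ?_)
    simp only [F, kernelThetaIntegrand, indicator_of_mem (hSU s hs u hu), one_mul]
    ring_nf
  calc δ * μ.real U
      ≤ ∫ u in U, ∫ s in S, F (s, u) ∂volume ∂μ :=
        setIntegral_ge_of_const_le_real hU hμU δ_le hF_rectangle.integral_prod_right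
    _ = ∫ p in S ×ˢ U, F p ∂((volume.restrict I).prod μ) := by
        rw [restrict_rectangle, integral_prod_symm _ hF_rectangle]
    _ ≤ ∫ p, F p ∂((volume.restrict I).prod μ) :=
        setIntegral_le_integral hF (ae_of_all _ kernelThetaIntegrand_nonneg)
    _ = kernelTheta μ I f z A := integral_prod _ hF

end Theta

lemma ne_of_derivWithin_ne_zero {f : ℝ → ℝ} {a b : ℝ} (hab : a < b) (hf : ContinuousOn f (Icc a b))
    (hderiv : ∀ s ∈ Ioo a b, derivWithin f (Icc a b) s ≠ 0) : f a ≠ f b := by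
  intro h
  obtain ⟨s, hs, deriv_eq_zero⟩ := exists_deriv_eq_zero hab hf h
  exact hderiv s hs ((derivWithin_of_mem_nhds (Icc_mem_nhds hs.1 hs.2)).trans deriv_eq_zero)

theorem smoothKernel_implies_H4hat_general
    (μ : Measure ℝ)
    (hμsq : Integrable (fun u : ℝ => u ^ 2) μ)
    (hμpos : 0 < μ (Ioi (0 : ℝ)))
    (I : Set ℝ)
    (f : ℝ → ℝ) (hfmeas : Measurable f)
    (hf2int : IntegrableOn (fun s => f s ^ 2) I)
    (a b : ℝ) (hab : a ≤ b) (habI : Icc a b ⊆ I)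
    (hfpos : ∀ s ∈ Icc a b, 0 < f s)
    (K : ℝ≥0) (hfLip : LipschitzOnWith K f (Icc a b))
    (hfne : f a ≠ f b) :
    ∃ q > (0 : ℝ), ∃ ϑ > (0 : ℝ), ∀ ε > (0 : ℝ), ∀ z : ℝ, ε ≤ |z| →
      ϑ * min (ε ^ 2) 1 ≤ kernelTheta μ I f z (Ici q) := by
  obtain ⟨κ, κ_pos, hκ⟩ := exists_pos_mul_min_le_integral_one_sub_cos hab hfLip hfne
  obtain ⟨c, c_pos, hcμ⟩ := exists_gt_measure_Ici_pos hμpos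
  obtain ⟨s₀, hs₀, isMin⟩ :=
    isCompact_Icc.exists_isMinOn (nonempty_Icc.2 hab) hfLip.continuousOn
  have fs₀_pos : 0 < f s₀ := hfpos s₀ hs₀
  have measure_ne_top : μ (Ici c) ≠ ⊤ := (measure_Ici_lt_top_of_integrable_sq hμsq c_pos).ne
  have measure_pos : 0 < μ.real (Ici c) := ENNReal.toReal_pos hcμ.ne' measure_ne_top
  refine ⟨f s₀ * c, by positivity, κ * min 1 (c ^ 2) * μ.real (Ici c), by positivity,
    fun ε ε_pos z hz => ?_⟩
  have lower_bound (u : ℝ) (hu : c ≤ u) :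
      κ * (min 1 (ε ^ 2) * min 1 (c ^ 2)) ≤ ∫ s in Icc a b, (1 - Real.cos (z * u * f s)) :=
    calc κ * (min 1 (ε ^ 2) * min 1 (c ^ 2))
        ≤ κ * (min 1 (z ^ 2) * min 1 (u ^ 2)) := by
          rw [← sq_abs z]
          gcongr
      _ ≤ κ * min 1 ((z * u) ^ 2) := by
          gcongr
          exact min_one_sq_mul_min_one_sq_le z u
      _ ≤ ∫ s in Icc a b, (1 - Real.cos (z * u * f s)) := hκ (z * u)
  calc κ * min 1 (c ^ 2) * μ.real (Ici c) * min (ε ^ 2) 1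
      = κ * (min 1 (ε ^ 2) * min 1 (c ^ 2)) * μ.real (Ici c) := by
        rw [min_comm (ε ^ 2)]
        ring
    _ ≤ kernelTheta μ I f z (Ici (f s₀ * c)) :=
        mul_measureReal_le_kernelTheta hμsq hfmeas hf2int measurableSet_Ici measurableSet_Icc habI
          measurableSet_Ici measure_ne_top
          (fun s hs u hu => mul_le_mul (isMin hs) hu c_pos.le (hfpos s hs).le) lower_bound

/-- Lemma 3.4: under `μ((0,∞)) > 0` and the smoothness condition (F₂) on the
kernel `f`, condition (Ĥ₄) holds: there are `q, ϑ > 0` with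
`Θ(z,[q,∞)) ≥ ϑ·min(ε²,1)` whenever `|z| ≥ ε`. -/
theorem smoothKernel_implies_H4hat
    (μ : Measure ℝ)
    (hμ0 : μ {0} = 0)
    (hμint : Integrable (fun u : ℝ => min 1 (u ^ 2)) μ)
    (hμpos : 0 < μ (Set.Ioi (0 : ℝ)))
    (hμexp : ∀ C : ℝ, Integrable (fun u : ℝ => Real.exp (C * u)) (μ.restrict {u : ℝ | 1 ≤ |u|}))
    (I : Set ℝ) (hI : I.OrdConnected)
    (f : ℝ → ℝ) (hfmeas : Measurable f)
    (hfbdd : ∃ C : ℝ, ∀ s ∈ I, |f s| ≤ C)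
    (hf2int : IntegrableOn (fun s => f s ^ 2) I)
    (hf2pos : 0 < ∫ s in I, f s ^ 2)
    (a b : ℝ) (hab : a < b) (habI : Set.Icc a b ⊆ I)
    (hfpos : ∀ s ∈ Set.Icc a b, 0 < f s)
    (hfC1 : ContDiffOn ℝ 1 f (Set.Icc a b))
    (hfderiv : ∀ s ∈ Set.Icc a b, derivWithin f (Set.Icc a b) s ≠ 0) :
    ∃ q > (0 : ℝ), ∃ ϑ > (0 : ℝ), ∀ ε > (0 : ℝ), ∀ z : ℝ, ε ≤ |z| →
      ϑ * min (ε ^ 2) 1 ≤ kernelTheta μ I f z (Set.Ici q) := by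
  obtain ⟨K, hfLip⟩ := hfC1.exists_lipschitzOnWith one_ne_zero (convex_Icc a b) isCompact_Icc
  exact smoothKernel_implies_H4hat_general μ
    (integrable_sq_of_integrable_exp hμint one_ne_zero (hμexp 1) (hμexp (-1))) hμpos I f hfmeas
    hf2int a b hab.le habI hfpos K hfLip
    (ne_of_derivWithin_ne_zero hab hfC1.continuousOn fun s hs => hfderiv s (Ioo_subset_Icc_self hs))
end

section
/- Let μ be a Borel measure on ℝ with μ({0}) = 0 and ∫_ℝ min(1,u²) μ(du) < ∞, satisfying μ((0,∞)) = +∞ and ∫_{|u|≥1} e^{Cu} μ(du) < ∞ for every C ∈ ℝ. Assume conditions (T1) and (T2). Fix λ > 0 and define, for z ∈ ℂ, Ψ(z) = ∫_{−∞}^0 ∫_ℝ (e^{−iz e^{λs} u} − 1 + iz e^{λs} u) μ(du) ds, and for k ≥ 0 and ζ ∈ ℝ, 𝓜_k(ζ) = ∫_{−∞}^0 e^{kλs} M_k(e^{λs} ζ) ds. For x ≥ 0 let ζ(x) be the unique ζ ≥ 0 with 𝓜₁(ζ) = x. Then the function p(x) := (1/2π) ∫_ℝ e^{ixz + Ψ(z)}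 dz is well defined (the integrand is absolutely integrable together with z^k e^{ixz+Ψ(z)} for every k ≥ 0), p is infinitely differentiable with all derivatives bounded, and p(x) · √(2π 𝓜₂(ζ(x))) · exp(x·ζ(x) − 𝓜₀(ζ(x))) → 1 as x → +∞. -/
open MeasureTheory Filter Set

/-- The exponential moment functions `M_k` of a Lévy measure `μ`. -/
noncomputable def levyM (μ : Measure ℝ) : ℕ → ℝ → ℝ
  | 0, ξ => ∫ u, (Real.exp (ξ * u) - 1 - ξ * u) ∂μ
  | 1, ξ => ∫ u, u * (Real.exp (ξ * u) - 1) ∂μ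
  | (n + 2), ξ => ∫ u, u ^ (n + 2) * Real.exp (ξ * u) ∂μ

/-- `𝓜_k(ζ) = ∫_I f(s)^k M_k(f(s)ζ) ds`. -/
noncomputable def kernelM (μ : Measure ℝ) (I : Set ℝ) (f : ℝ → ℝ) (k : ℕ) (ξ : ℝ) : ℝ :=
  ∫ s in I, (f s) ^ k * levyM μ k (f s * ξ)

/-- `Ψ(z) = ∫_I ∫_ℝ (e^{−izf(s)u} − 1 + izf(s)u) μ(du) ds`. -/
noncomputable def kernelPsi (μ : Measure ℝ) (I : Set ℝ) (f : ℝ → ℝ) (z : ℂ) : ℂ :=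
  ∫ s in I, ∫ u, (Complex.exp (-(Complex.I * z * ((f s * u : ℝ) : ℂ))) - 1
    + Complex.I * z * ((f s * u : ℝ) : ℂ)) ∂μ

/-!
The stationary variable `∫ f(s) dZ_s` is infinitely divisible, and its Lévy measure `ν` is the
image of `ds ⊗ μ` under `(s, u) ↦ f(s) u`; `𝓜_k` and `Ψ` are the functions `M_k` and the Lévy
exponent of `ν`. Moving the Fourier inversion contour to the saddle point `i ζ(x)` gives
`p(x) = e^{𝓜₀(ζ) - x ζ} (1/2π) ∫ e^{φ_ζ(y)} dy`, where
`φ_ζ(y) = -𝓜₂(ζ) y²/2 + O(√(𝓜₂(ζ) 𝓜₄(ζ)) |y|³)` and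
`-Re φ_ζ(y) = ∫ e^{ζ v} (1 - cos (y v)) ν(dv)` is the tilted damping. After the rescaling
`y = t / √𝓜₂(ζ)` the integrand tends to the Gaussian because the kurtosis `𝓜₄ / 𝓜₂²` vanishes (T1);
the damping, which grows exponentially in `ζ`, makes the range of larger `y` negligible against
`√𝓜₂(ζ)` (T2). For `f(s) = e^{λs}` the oscillation of `cos (y u e^{λs})` along `s` supplies
the damping at every frequency, with logarithmic growth in `|y|`.
-/

namespace LevyOU

open Complex Asymptotics
open scoped Topology FourierTransform

section Elementary

theorem norm_exp_sub_one_le (w : ℂ) : ‖cexp w - 1‖ ≤ ‖w‖ * Real.exp ‖w‖ := by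
  simpa using norm_exp_sub_sum_le_norm_mul_exp w 1

theorem norm_exp_sub_one_sub_id_le (w : ℂ) : ‖cexp w - 1 - w‖ ≤ ‖w‖ ^ 2 * Real.exp ‖w‖ := by
  simpa [Finset.sum_range_succ, sub_add_eq_sub_sub] using norm_exp_sub_sum_le_norm_mul_exp w 2

theorem abs_exp_sub_one_le (x : ℝ) : |Real.exp x - 1| ≤ |x| * Real.exp |x| := by
  have h := norm_exp_sub_one_le x
  rwa [← ofReal_exp, ← ofReal_one, ← ofReal_sub, norm_real, norm_real] at h

theorem abs_exp_sub_one_sub_id_le (x : ℝ) : |Real.exp x - 1 - x| ≤ |x| ^ 2 * Real.exp |x| := by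
  have h := norm_exp_sub_one_sub_id_le x
  rwa [← ofReal_exp, ← ofReal_one, ← ofReal_sub, ← ofReal_sub, norm_real, norm_real] at h

theorem norm_exp_neg_I_mul (w : ℝ) : ‖cexp (-(I * w))‖ = 1 := by
  simp [Complex.norm_exp]

theorem norm_exp_neg_I_mul_sub_taylor_le (w : ℝ) :
    ‖cexp (-(I * w)) - 1 + I * w + (w : ℂ) ^ 2 / 2‖ ≤ 4 * |w| ^ 3 := by
  rcases le_total |w| 1 with hw | hw
  · have h := norm_exp_sub_sum_le_norm_mul_exp (-(I * w)) 3
    have hsum : ∑ m ∈ Finset.range 3, (-(I * w : ℂ)) ^ m / m.factorial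
        = 1 - I * w - (w : ℂ) ^ 2 / 2 := by
      simp only [Finset.sum_range_succ, Finset.sum_range_zero, Nat.factorial, neg_sq, mul_pow, I_sq]
      push_cast
      ring
    have hnorm : ‖-(I * w : ℂ)‖ = |w| := by simp
    have hexp : Real.exp |w| ≤ 4 := by
      linarith [Real.exp_le_exp.2 hw, Real.exp_one_lt_d9]
    rw [hsum, hnorm] at h
    calc _ = ‖cexp (-(I * w)) - (1 - I * w - (w : ℂ) ^ 2 / 2)‖ := by congr 1; ring
      _ ≤ |w| ^ 3 * 4 := h.trans (by gcongr)
      _ = _ := mul_comm _ _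
  · have htriangle : ‖cexp (-(I * w)) - 1 + I * w + (w : ℂ) ^ 2 / 2‖
        ≤ 1 + 1 + |w| + |w| ^ 2 / 2 := by
      refine (norm_add₃_le).trans (add_le_add (add_le_add ((norm_sub_le _ _).trans ?_) ?_) ?_)
      · rw [norm_exp_neg_I_mul, norm_one]
      · simp
      · simp
    have h1 : (1 : ℝ) ≤ |w| ^ 3 := one_le_pow₀ hw
    have h2 : |w| ≤ |w| ^ 3 := le_self_pow₀ hw (by norm_num)
    have h3 : |w| ^ 2 ≤ |w| ^ 3 := pow_le_pow_right₀ hw (by norm_num)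
    linarith

theorem one_sub_cos_nonneg (w : ℝ) : 0 ≤ 1 - Real.cos w :=
  sub_nonneg.2 (Real.cos_le_one w)

theorem one_sub_cos_le_sq (w : ℝ) : 1 - Real.cos w ≤ w ^ 2 := by
  nlinarith [Real.one_sub_sq_div_two_le_cos (x := w), sq_nonneg w]

theorem sq_sub_pow_four_le_one_sub_cos (w : ℝ) : w ^ 2 / 2 - w ^ 4 / 2 ≤ 1 - Real.cos w := by
  rcases le_total |w| 1 with hw | hw
  · have h := (abs_le.1 (Real.cos_bound hw)).2
    rw [Even.pow_abs (by decide)] at h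
    nlinarith [pow_nonneg (sq_nonneg w) 2]
  · have h1 : 1 ≤ w ^ 2 := (one_le_sq_iff_one_le_abs w).2 hw
    nlinarith [one_sub_cos_nonneg w]

theorem exp_mul_le_exp_abs_mul_abs (ξ u : ℝ) : Real.exp (ξ * u) ≤ Real.exp (|ξ| * |u|) := by
  rw [← abs_mul]
  exact Real.exp_le_exp.2 (le_abs_self _)

theorem exp_mul_one_sub_cos_le {a b δ u ζ : ℝ} (ha : 0 ≤ a) (hab : a ≤ b) (hδ : 0 ≤ δ)
    (hδu : δ ≤ u) (hζ : 0 ≤ ζ) (x : ℝ) :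
    Real.exp (a * δ * ζ) * (1 - Real.cos x) ≤ Real.exp (ζ * (b * u)) * (1 - Real.cos x) := by
  refine mul_le_mul_of_nonneg_right (Real.exp_le_exp.2 ?_) (one_sub_cos_nonneg x)
  rw [mul_comm]
  gcongr
  exact ha.trans hab

end Elementary

section Exponents

/-- The integrand of `levyM`, so that `levyM μ k ξ = ∫ u, levyIntegrand k ξ u ∂μ` uniformly
in `k`. -/
noncomputable def levyIntegrand : ℕ → ℝ → ℝ → ℝ
  | 0, ξ, u => Real.exp (ξ * u) - 1 - ξ * u
  | 1, ξ, u => u * (Real.exp (ξ * u) - 1)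
  | (n + 2), ξ, u => u ^ (n + 2) * Real.exp (ξ * u)

/-- The measure `ν` integrates `v² e^{C|v|}` for every `C`, i.e. it is (up to an atom at the
origin) a Lévy measure with all exponential moments at infinity. -/
def HasExpMoments (ν : Measure ℝ) : Prop :=
  ∀ C : ℝ, Integrable (fun v : ℝ => v ^ 2 * Real.exp (C * |v|)) ν

/-- The characteristic exponent `∫ (e^{-izv} - 1 + izv) ν(dv)` at a complex argument. -/
noncomputable def levyExponent (ν : Measure ℝ) (z : ℂ) : ℂ :=
  ∫ v : ℝ, (cexp (-(I * z * (v : ℂ))) - 1 + I * z * (v : ℂ)) ∂ν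

/-- The characteristic exponent of the Esscher tilt `e^{ζv} ν(dv)`. -/
noncomputable def tiltedExponent (ν : Measure ℝ) (ζ y : ℝ) : ℂ :=
  ∫ v : ℝ, (Real.exp (ζ * v) : ℂ) *
    (cexp (-(I * ((y * v : ℝ) : ℂ))) - 1 + I * ((y * v : ℝ) : ℂ)) ∂ν

/-- Minus the real part of `tiltedExponent`: the rate at which the integrand decays along the
shifted contour `y + iζ`. -/
noncomputable def tiltedDamping (ν : Measure ℝ) (ζ y : ℝ) : ℝ :=
  ∫ v : ℝ, Real.exp (ζ * v) * (1 - Real.cos (y * v)) ∂ν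

variable {ν : Measure ℝ}

theorem levyM_eq_integral (ν : Measure ℝ) (k : ℕ) (ξ : ℝ) :
    levyM ν k ξ = ∫ v, levyIntegrand k ξ v ∂ν := by
  rcases k with _ | _ | k <;> rfl

theorem levyM_of_two_le (ν : Measure ℝ) {k : ℕ} (hk : 2 ≤ k) (ξ : ℝ) :
    levyM ν k ξ = ∫ v, v ^ k * Real.exp (ξ * v) ∂ν := by
  obtain ⟨n, rfl⟩ := Nat.exists_eq_add_of_le' hk
  rfl

theorem levyIntegrand_mul (k : ℕ) (ξ a u : ℝ) :
    levyIntegrand k ξ (a * u) = a ^ k * levyIntegrand k (a * ξ) u := by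
  have hmul : ξ * (a * u) = a * ξ * u := by ring
  rcases k with _ | _ | k <;> simp only [levyIntegrand, hmul] <;> ring

theorem continuous_levyIntegrand (k : ℕ) (ξ : ℝ) : Continuous (levyIntegrand k ξ) := by
  rcases k with _ | _ | k <;> unfold levyIntegrand <;> fun_prop

theorem HasExpMoments.integrable_of_norm_le {E : Type*} [NormedAddCommGroup E]
    [SecondCountableTopology E] (hν : HasExpMoments ν) {g : ℝ → E} (hg : Continuous g) (A C : ℝ)
    (hbound : ∀ v, ‖g v‖ ≤ A * (v ^ 2 * Real.exp (C * |v|))) : Integrable g ν :=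
  ((hν C).const_mul A).mono' hg.aestronglyMeasurable (Eventually.of_forall hbound)

theorem HasExpMoments.integrable_abs_pow_mul_exp (hν : HasExpMoments ν) {k : ℕ} (hk : 2 ≤ k)
    (ξ : ℝ) : Integrable (fun v => |v| ^ k * Real.exp (ξ * v)) ν := by
  obtain ⟨n, rfl⟩ := Nat.exists_eq_add_of_le' hk
  refine hν.integrable_of_norm_le (by fun_prop) n.factorial (|ξ| + 1) fun v => ?_
  have hpow : |v| ^ n ≤ n.factorial * Real.exp |v| := by
    rw [mul_comm]
    exact (div_le_iff₀ (by positivity)).1 (Real.pow_div_factorial_le_exp |v| (abs_nonneg _) n)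
  rw [Real.norm_of_nonneg (by positivity)]
  calc |v| ^ (n + 2) * Real.exp (ξ * v)
      ≤ (n.factorial * Real.exp |v|) * |v| ^ 2 * Real.exp (|ξ| * |v|) := by
        rw [pow_add]
        exact mul_le_mul (by gcongr) (exp_mul_le_exp_abs_mul_abs ξ v) (by positivity)
          (by positivity)
    _ = n.factorial * (v ^ 2 * Real.exp ((|ξ| + 1) * |v|)) := by
        rw [add_mul, Real.exp_add, one_mul, sq_abs]
        ring

theorem HasExpMoments.integrable_pow_mul_exp (hν : HasExpMoments ν) {k : ℕ} (hk : 2 ≤ k)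
    (ξ : ℝ) : Integrable (fun v => v ^ k * Real.exp (ξ * v)) ν :=
  (hν.integrable_abs_pow_mul_exp hk ξ).mono' (by fun_prop) (Eventually.of_forall fun v => by simp)

theorem HasExpMoments.integrable_levyIntegrand (hν : HasExpMoments ν) (k : ℕ) (ξ : ℝ) :
    Integrable (levyIntegrand k ξ) ν := by
  have hcont := continuous_levyIntegrand k ξ
  rcases k with _ | _ | k
  · refine hν.integrable_of_norm_le hcont (ξ ^ 2) |ξ| fun v => ?_
    refine (abs_exp_sub_one_sub_id_le _).trans_eq ?_
    rw [abs_mul, mul_pow, sq_abs, sq_abs, mul_assoc]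
  · refine hν.integrable_of_norm_le hcont |ξ| |ξ| fun v => ?_
    rw [levyIntegrand, Real.norm_eq_abs, abs_mul]
    refine (mul_le_mul_of_nonneg_left (abs_exp_sub_one_le _) (abs_nonneg _)).trans_eq ?_
    rw [abs_mul, ← sq_abs v]
    ring
  · exact hν.integrable_pow_mul_exp (Nat.le_add_left 2 k) ξ

theorem HasExpMoments.integrable_levyExponent (hν : HasExpMoments ν) (z : ℂ) :
    Integrable (fun v : ℝ => cexp (-(I * z * (v : ℂ))) - 1 + I * z * (v : ℂ)) ν := by
  refine hν.integrable_of_norm_le (by fun_prop) (‖z‖ ^ 2) ‖z‖ fun v => ?_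
  have h := norm_exp_sub_one_sub_id_le (-(I * z * (v : ℂ)))
  rw [sub_neg_eq_add] at h
  refine h.trans_eq ?_
  simp [mul_pow, mul_assoc]

theorem HasExpMoments.integrable_tiltedExponent (hν : HasExpMoments ν) (ζ y : ℝ) :
    Integrable (fun v : ℝ => (Real.exp (ζ * v) : ℂ) *
      (cexp (-(I * ((y * v : ℝ) : ℂ))) - 1 + I * ((y * v : ℝ) : ℂ))) ν := by
  refine hν.integrable_of_norm_le (by fun_prop) (y ^ 2) (|ζ| + |y|) fun v => ?_
  have h := norm_exp_sub_one_sub_id_le (-(I * ((y * v : ℝ) : ℂ)))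
  have hnorm : ‖-(I * ((y * v : ℝ) : ℂ))‖ = |y| * |v| := by simp
  rw [sub_neg_eq_add, hnorm] at h
  rw [norm_mul, norm_real, Real.norm_eq_abs, Real.abs_exp]
  calc _ ≤ Real.exp (|ζ| * |v|) * ((|y| * |v|) ^ 2 * Real.exp (|y| * |v|)) := by
        exact mul_le_mul (exp_mul_le_exp_abs_mul_abs ζ v) h (by positivity) (by positivity)
    _ = _ := by rw [mul_pow, sq_abs, sq_abs, add_mul, Real.exp_add]; ring

theorem HasExpMoments.integrable_tiltedDamping (hν : HasExpMoments ν) (ζ y : ℝ) :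
    Integrable (fun v : ℝ => Real.exp (ζ * v) * (1 - Real.cos (y * v))) ν := by
  refine hν.integrable_of_norm_le (by fun_prop) (y ^ 2) |ζ| fun v => ?_
  rw [Real.norm_of_nonneg (mul_nonneg (Real.exp_pos _).le (one_sub_cos_nonneg _))]
  calc _ ≤ Real.exp (|ζ| * |v|) * (y * v) ^ 2 :=
        mul_le_mul (exp_mul_le_exp_abs_mul_abs ζ v) (one_sub_cos_le_sq _) (one_sub_cos_nonneg _)
          (Real.exp_pos _).le
    _ = _ := by ring

theorem levyM_even_nonneg {k : ℕ} (hk : Even k) (ν : Measure ℝ) (ξ : ℝ) : 0 ≤ levyM ν k ξ := by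
  rw [levyM_eq_integral]
  refine integral_nonneg fun v => ?_
  rcases k with _ | _ | k
  · simp only [levyIntegrand, Pi.zero_apply]
    linarith [Real.add_one_le_exp (ξ * v)]
  · exact absurd hk (by decide)
  · exact mul_nonneg (hk.pow_nonneg v) (Real.exp_pos _).le

theorem tiltedDamping_nonneg (ν : Measure ℝ) (ζ y : ℝ) : 0 ≤ tiltedDamping ν ζ y :=
  integral_nonneg fun _ => mul_nonneg (Real.exp_pos _).le (one_sub_cos_nonneg _)

theorem levyExponent_add_mul_I (hν : HasExpMoments ν) (ζ y : ℝ) :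
    levyExponent ν (y + ζ * I)
      = levyM ν 0 ζ + tiltedExponent ν ζ y - I * y * levyM ν 1 ζ := by
  have h0 : Integrable (fun v => (levyIntegrand 0 ζ v : ℂ)) ν :=
    (hν.integrable_levyIntegrand 0 ζ).ofReal
  have h1 : Integrable (fun v => I * y * (levyIntegrand 1 ζ v : ℂ)) ν :=
    (hν.integrable_levyIntegrand 1 ζ).ofReal.const_mul (I * y)
  have hΦ := hν.integrable_tiltedExponent ζ y
  rw [levyM_eq_integral, levyM_eq_integral, ← integral_complex_ofReal, ← integral_complex_ofReal,
    ← integral_const_mul, tiltedExponent, levyExponent, ← integral_add' h0 hΦ,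
    ← integral_sub (h0.add hΦ) h1]
  congr 1 with v
  have hexp : cexp (-(I * (y + ζ * I) * v)) = cexp (ζ * v) * cexp (-(I * (y * v))) := by
    rw [← Complex.exp_add]
    congr 1
    linear_combination (-(ζ * v : ℂ)) * I_sq
  simp only [levyIntegrand, Pi.add_apply]
  push_cast
  rw [hexp]
  linear_combination (ζ * v : ℂ) * I_sq

theorem re_tiltedExponent (hν : HasExpMoments ν) (ζ y : ℝ) :
    (tiltedExponent ν ζ y).re = -tiltedDamping ν ζ y := by
  rw [tiltedExponent, tiltedDamping, ← integral_neg, ← RCLike.re_eq_complex_re,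
    ← integral_re (hν.integrable_tiltedExponent ζ y)]
  congr 1 with v
  have hcos : (cexp (-(I * ((y * v : ℝ) : ℂ)))).re = Real.cos (y * v) := by
    rw [Complex.exp_re]
    simp [-ofReal_mul]
  simp only [RCLike.re_eq_complex_re, re_ofReal_mul, add_re, sub_re, hcos, I_mul_re, ofReal_im,
    one_re]
  ring

theorem differentiable_levyExponent (hν : HasExpMoments ν) :
    Differentiable ℂ (levyExponent ν) := by
  intro z
  have hderiv : ∀ (v : ℝ) (w : ℂ), HasDerivAt
      (fun w : ℂ => cexp (-(I * w * (v : ℂ))) - 1 + I * w * (v : ℂ))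
      (-(I * v) * (cexp (-(I * w * (v : ℂ))) - 1)) w := fun v w => by
    have hlin : HasDerivAt (fun w : ℂ => I * w * (v : ℂ)) (I * v) w := by
      simpa using ((hasDerivAt_id w).const_mul I).mul_const (v : ℂ)
    exact (((hlin.fun_neg.cexp).sub_const 1).add hlin).congr_deriv (by ring)
  refine (hasDerivAt_integral_of_dominated_loc_of_deriv_le
    (bound := fun v => (‖z‖ + 1) * (v ^ 2 * Real.exp ((‖z‖ + 1) * |v|)))
    (Metric.ball_mem_nhds z one_pos)
    (Eventually.of_forall fun w => (hν.integrable_levyExponent w).aestronglyMeasurable)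
    (hν.integrable_levyExponent z) (Continuous.aestronglyMeasurable (by fun_prop))
    (Eventually.of_forall fun v w hw => ?_) ((hν _).const_mul _)
    (Eventually.of_forall fun v w _ => hderiv v w)).2.differentiableAt
  have hwz : ‖w‖ ≤ ‖z‖ + 1 := by
    linarith [norm_le_norm_add_norm_sub' w z, mem_ball_iff_norm.1 hw]
  have h := norm_exp_sub_one_le (-(I * w * (v : ℂ)))
  have hnorm : ‖-(I * w * (v : ℂ))‖ = ‖w‖ * |v| := by simp
  have hnorm' : ‖-(I * (v : ℂ))‖ = |v| := by simp
  rw [hnorm] at h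
  rw [norm_mul, hnorm']
  calc _ ≤ |v| * ((‖z‖ + 1) * |v| * Real.exp ((‖z‖ + 1) * |v|)) := by
        gcongr
        exact h.trans (by gcongr)
    _ = _ := by rw [← sq_abs v]; ring

theorem continuous_levyExponent (hν : HasExpMoments ν) : Continuous (levyExponent ν) :=
  (differentiable_levyExponent hν).continuous

theorem continuous_tiltedExponent (hν : HasExpMoments ν) (ζ : ℝ) :
    Continuous (tiltedExponent ν ζ) := by
  have heq : tiltedExponent ν ζ =
      fun y : ℝ => levyExponent ν (y + ζ * I) - levyM ν 0 ζ + I * y * levyM ν 1 ζ := by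
    ext y
    rw [levyExponent_add_mul_I hν]
    ring
  rw [heq]
  have := continuous_levyExponent hν
  fun_prop

theorem norm_cexp_tiltedExponent (hν : HasExpMoments ν) (ζ y : ℝ) :
    ‖cexp (tiltedExponent ν ζ y)‖ = Real.exp (-tiltedDamping ν ζ y) := by
  rw [Complex.norm_exp, re_tiltedExponent hν]

theorem I_mul_add_levyExponent (hν : HasExpMoments ν) (x ζ y : ℝ) :
    I * x * (y + ζ * I) + levyExponent ν (y + ζ * I)
      = ((levyM ν 0 ζ - x * ζ : ℝ) : ℂ) + ((x - levyM ν 1 ζ) * y : ℝ) * I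
        + tiltedExponent ν ζ y := by
  rw [levyExponent_add_mul_I hν]
  push_cast
  linear_combination (x * ζ : ℂ) * I_sq

theorem norm_cexp_I_mul_add_levyExponent (hν : HasExpMoments ν) (x ζ y : ℝ) :
    ‖cexp (I * x * (y + ζ * I) + levyExponent ν (y + ζ * I))‖
      = Real.exp (levyM ν 0 ζ - x * ζ) * Real.exp (-tiltedDamping ν ζ y) := by
  rw [I_mul_add_levyExponent hν, Complex.exp_add, Complex.exp_add, norm_mul, norm_mul,
    norm_exp_ofReal_mul_I, mul_one, norm_cexp_tiltedExponent hν, ← ofReal_exp, norm_real,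
    Real.norm_of_nonneg (Real.exp_pos _).le]

theorem norm_cexp_I_mul_add_levyExponent_ofReal (hν : HasExpMoments ν) (x y : ℝ) :
    ‖cexp (I * x * y + levyExponent ν y)‖ = Real.exp (-tiltedDamping ν 0 y) := by
  simpa [levyM] using norm_cexp_I_mul_add_levyExponent hν x 0 y

end Exponents

section FourierInversion

theorem contDiff_integral_cexp_mul_and_bounded {g : ℝ → ℂ} (hg : AEStronglyMeasurable g)
    (hmoments : ∀ k : ℕ, Integrable fun z : ℝ => ‖z‖ ^ k * ‖g z‖) :
    ContDiff ℝ (⊤ : ℕ∞) (fun x : ℝ => ∫ z : ℝ, cexp (I * x * z) * g z) ∧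
      ∀ n : ℕ, ∃ C : ℝ, ∀ x : ℝ,
        ‖iteratedFDeriv ℝ n (fun x : ℝ => ∫ z : ℝ, cexp (I * x * z) * g z) x‖ ≤ C := by
  let L : ℝ →L[ℝ] ℝ →L[ℝ] ℝ := (-(2 * Real.pi)⁻¹) • ContinuousLinearMap.mul ℝ ℝ
  have hF : (fun x : ℝ => ∫ z : ℝ, cexp (I * x * z) * g z)
      = VectorFourier.fourierIntegral 𝐞 volume L.toLinearMap₁₂ g := by
    ext x
    refine integral_congr_ae (Eventually.of_forall fun z => ?_)
    have hphase : 2 * Real.pi * -(L z x) = x * z := by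
      simp only [L, smul_apply, ContinuousLinearMap.mul_apply', smul_eq_mul]
      field_simp
    change cexp (I * x * z) * g z = (𝐞 (-(L z x)) : ℂ) * g z
    rw [Real.fourierChar_apply, hphase, ofReal_mul]
    congr 2
    ring
  rw [hF]
  refine ⟨VectorFourier.contDiff_fourierIntegral L fun n _ => hmoments n, fun n =>
    ⟨∫ z, ‖VectorFourier.fourierPowSMulRight L g z n‖, fun x => ?_⟩⟩
  rw [VectorFourier.iteratedFDeriv_fourierIntegral L (N := ⊤) (fun k _ => hmoments k) hg le_top]
  exact VectorFourier.norm_fourierIntegral_le_integral_norm _ _ _ _ _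

theorem contDiff_and_bounded_iteratedDeriv_of_eq_re_integral {g : ℝ → ℂ}
    (hg : AEStronglyMeasurable g) (hmoments : ∀ k : ℕ, Integrable fun z : ℝ => ‖z‖ ^ k * ‖g z‖)
    {c : ℝ} {p : ℝ → ℝ} (hp : ∀ x : ℝ, p x = c * (∫ z : ℝ, cexp (I * x * z) * g z).re) :
    ContDiff ℝ (⊤ : ℕ∞) p ∧ ∀ n : ℕ, ∃ C : ℝ, ∀ x : ℝ, |iteratedDeriv n p x| ≤ C := by
  obtain ⟨hsmooth, hbounded⟩ := contDiff_integral_cexp_mul_and_bounded hg hmoments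
  have hp' : p = (c • reCLM) ∘ fun x : ℝ => ∫ z : ℝ, cexp (I * x * z) * g z := by
    ext x
    simp [hp]
  rw [hp']
  refine ⟨(c • reCLM).contDiff.comp hsmooth, fun n => ?_⟩
  obtain ⟨C, hC⟩ := hbounded n
  refine ⟨‖c • reCLM‖ * C, fun x => ?_⟩
  rw [← Real.norm_eq_abs, ← norm_iteratedFDeriv_eq_norm_iteratedDeriv]
  refine ((c • reCLM).norm_iteratedFDeriv_comp_left hsmooth.contDiffAt
    (mod_cast le_top)).trans ?_
  gcongr
  exact hC x

theorem integral_eq_integral_add_mul_I {E : Type*} [NormedAddCommGroup E] [NormedSpace ℂ E]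
    [CompleteSpace E] {F : ℂ → E} (hF : Differentiable ℂ F) {g : ℝ → ℝ} (hg : Integrable g)
    (hg0 : Tendsto g (cocompact ℝ) (𝓝 0)) {ζ : ℝ}
    (hbound : ∀ η ∈ uIcc 0 ζ, ∀ y : ℝ, ‖F (y + η * I)‖ ≤ g y) :
    ∫ y : ℝ, F y = ∫ y : ℝ, F (y + ζ * I) := by
  have hcont := hF.continuous
  have hhorizontal : ∀ η ∈ uIcc 0 ζ, Tendsto (fun T : ℝ => ∫ y in (-T)..T, F (y + η * I)) atTop
      (𝓝 (∫ y : ℝ, F (y + η * I))) := fun η hη =>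
    intervalIntegral_tendsto_integral
      (hg.mono' (by fun_prop) (Eventually.of_forall (hbound η hη)))
      tendsto_neg_atTop_atBot tendsto_id
  have hvertical : ∀ l : Filter ℝ, l ≤ cocompact ℝ →
      Tendsto (fun y : ℝ => ∫ η in (0 : ℝ)..ζ, F (y + η * I)) l (𝓝 0) := fun l hl => by
    refine squeeze_zero_norm (fun y => intervalIntegral.norm_integral_le_of_norm_le_const
      fun η hη => hbound η (uIoc_subset_uIcc hη) y) ?_
    simpa using (hg0.mono_left hl).mul_const |ζ - 0|
  have hrect : ∀ T : ℝ, (∫ y in (-T)..T, F (y + (0 : ℝ) * I)) - (∫ y in (-T)..T, F (y + ζ * I))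
      + I • (∫ η in (0 : ℝ)..ζ, F (T + η * I))
      - I • (∫ η in (0 : ℝ)..ζ, F ((-T : ℝ) + η * I)) = 0 := fun T => by
    simpa using integral_boundary_rect_eq_zero_of_differentiableOn F (-T : ℝ) (T + ζ * I)
      hF.differentiableOn
  have hlim := (((hhorizontal 0 left_mem_uIcc).sub (hhorizontal ζ right_mem_uIcc)).add
    ((hvertical atTop atTop_le_cocompact).const_smul I)).sub
    (((hvertical atBot atBot_le_cocompact).comp tendsto_neg_atTop_atBot).const_smul I)
  have hzero := tendsto_nhds_unique (hlim.congr hrect) tendsto_const_nhds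
  simpa [sub_eq_zero] using hzero

/-- Superpolynomial decay, uniform in the tilt `ζ ≥ 0`, of the modulus `e^{-θ(ζ, y)}` of the
tilted characteristic function. -/
def HasUniformRapidDecay (ν : Measure ℝ) : Prop :=
  ∀ N : ℕ, ∃ K : ℝ, ∀ ζ : ℝ, 0 ≤ ζ → ∀ y : ℝ,
    Real.exp (-tiltedDamping ν ζ y) ≤ K * ((1 + y ^ 2) ^ N)⁻¹

variable {ν : Measure ℝ}

theorem HasUniformRapidDecay.exists_exp_neg_le (hdecay : HasUniformRapidDecay ν) :
    ∃ K : ℝ, ∀ ζ : ℝ, 0 ≤ ζ → ∀ y : ℝ,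
      Real.exp (-tiltedDamping ν ζ y) ≤ K * (1 + y ^ 2)⁻¹ := by
  simpa only [pow_one] using hdecay 1

theorem integrable_pow_mul_exp_neg_tiltedDamping (hν : HasExpMoments ν)
    (hdecay : HasUniformRapidDecay ν) (k : ℕ) :
    Integrable fun y : ℝ => ‖y‖ ^ k * Real.exp (-tiltedDamping ν 0 y) := by
  obtain ⟨K, hK⟩ := hdecay (k + 1)
  have hcont : Continuous (tiltedDamping ν 0) := by
    have hre : tiltedDamping ν 0 = fun y => -(tiltedExponent ν 0 y).re := by
      simp [re_tiltedExponent hν]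
    have := continuous_tiltedExponent hν 0
    rw [hre]
    fun_prop
  refine (integrable_inv_one_add_sq.const_mul K).mono' (by fun_prop)
    (Eventually.of_forall fun y => ?_)
  have hy : ‖y‖ ^ k ≤ (1 + y ^ 2) ^ k := by
    refine pow_le_pow_left₀ (norm_nonneg _) ?_ k
    rw [Real.norm_eq_abs, ← sq_abs]
    nlinarith [sq_nonneg (|y| - 1), abs_nonneg y]
  rw [Real.norm_of_nonneg (by positivity)]
  calc _ ≤ (1 + y ^ 2) ^ k * (K * ((1 + y ^ 2) ^ (k + 1))⁻¹) := by
        gcongr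
        exact hK 0 le_rfl y
    _ = _ := by field_simp; ring

theorem integrable_pow_mul_cexp_levyExponent (hν : HasExpMoments ν)
    (hdecay : HasUniformRapidDecay ν) (k : ℕ) (x : ℝ) :
    Integrable fun z : ℝ => (z : ℂ) ^ k * cexp (I * x * z + levyExponent ν z) := by
  have hcont := continuous_levyExponent hν
  refine (integrable_pow_mul_exp_neg_tiltedDamping hν hdecay k).mono' (by fun_prop)
    (Eventually.of_forall fun z => ?_)
  rw [norm_mul, norm_pow, norm_real, norm_cexp_I_mul_add_levyExponent_ofReal hν]

theorem contDiff_and_bounded_iteratedDeriv_density (hν : HasExpMoments ν)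
    (hdecay : HasUniformRapidDecay ν) {c : ℝ} {p : ℝ → ℝ}
    (hp : ∀ x : ℝ, p x = c * (∫ z : ℝ, cexp (I * x * z + levyExponent ν z)).re) :
    ContDiff ℝ (⊤ : ℕ∞) p ∧ ∀ n : ℕ, ∃ C : ℝ, ∀ x : ℝ, |iteratedDeriv n p x| ≤ C := by
  have hcont := continuous_levyExponent hν
  refine contDiff_and_bounded_iteratedDeriv_of_eq_re_integral
    (g := fun z : ℝ => cexp (levyExponent ν z)) (by fun_prop) (fun k => ?_)
    (by simpa only [Complex.exp_add] using hp)
  have hnorm : ∀ z : ℝ, ‖cexp (levyExponent ν z)‖ = Real.exp (-tiltedDamping ν 0 z) := fun z => by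
    simpa using norm_cexp_I_mul_add_levyExponent_ofReal hν 0 z
  simpa only [hnorm] using integrable_pow_mul_exp_neg_tiltedDamping hν hdecay k

theorem monotone_mul_exp_mul (v : ℝ) : Monotone fun ζ : ℝ => v * Real.exp (ζ * v) := by
  intro η ζ hηζ
  rcases le_total 0 v with hv | hv
  · have : η * v ≤ ζ * v := mul_le_mul_of_nonneg_right hηζ hv
    dsimp only
    gcongr
  · exact mul_le_mul_of_nonpos_left
      (Real.exp_le_exp.2 (mul_le_mul_of_nonpos_right hηζ hv)) hv

theorem monotone_levyM_one (hν : HasExpMoments ν) : Monotone (levyM ν 1) := by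
  intro η ζ hηζ
  rw [levyM_eq_integral, levyM_eq_integral]
  refine integral_mono (hν.integrable_levyIntegrand 1 η) (hν.integrable_levyIntegrand 1 ζ)
    fun v => ?_
  have h := monotone_mul_exp_mul v hηζ
  simp only [levyIntegrand, mul_sub] at h ⊢
  linarith

theorem levyM_zero_mono (hν : HasExpMoments ν) {η ζ : ℝ} (hη : 0 ≤ η) (hηζ : η ≤ ζ) :
    levyM ν 0 η ≤ levyM ν 0 ζ := by
  rw [levyM_eq_integral, levyM_eq_integral]
  refine integral_mono (hν.integrable_levyIntegrand 0 η) (hν.integrable_levyIntegrand 0 ζ)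
    fun v => ?_
  have hslope : 0 ≤ v * (Real.exp (η * v) - 1) := by
    have h := monotone_mul_exp_mul v hη
    simp only [zero_mul, Real.exp_zero, mul_one] at h
    linarith
  have htangent : Real.exp (η * v) * (ζ * v - η * v + 1) ≤ Real.exp (ζ * v) := by
    calc _ ≤ Real.exp (η * v) * Real.exp (ζ * v - η * v) := by
          gcongr
          exact Real.add_one_le_exp _
      _ = _ := by rw [← Real.exp_add]; congr 1; ring
  simp only [levyIntegrand]
  nlinarith [mul_nonneg hslope (sub_nonneg.2 hηζ)]

theorem tendsto_atTop_of_levyM_one_eq (hν : HasExpMoments ν) {ζ : ℝ → ℝ}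
    (hζ : ∀ᶠ x in atTop, levyM ν 1 (ζ x) = x) : Tendsto ζ atTop atTop := by
  refine tendsto_atTop.2 fun b => ?_
  filter_upwards [hζ, eventually_gt_atTop (levyM ν 1 b)] with x hx hbx
  exact ((monotone_levyM_one hν).reflect_lt (hbx.trans_eq hx.symm)).le

theorem tendsto_inv_one_add_sq_cocompact :
    Tendsto (fun y : ℝ => (1 + y ^ 2)⁻¹) (cocompact ℝ) (𝓝 0) := by
  refine tendsto_inv_atTop_zero.comp (tendsto_atTop_add_const_left _ _ ?_)
  simpa [Function.comp_def] using
    (tendsto_pow_atTop two_ne_zero).comp (tendsto_norm_cocompact_atTop (E := ℝ))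

theorem integral_cexp_levyExponent_shift (hν : HasExpMoments ν) (hdecay : HasUniformRapidDecay ν)
    (x : ℝ) {ζ : ℝ} (hζ : 0 ≤ ζ) :
    ∫ z : ℝ, cexp (I * x * z + levyExponent ν z)
      = ∫ y : ℝ, cexp (I * x * (y + ζ * I) + levyExponent ν (y + ζ * I)) := by
  obtain ⟨K, hK⟩ := hdecay.exists_exp_neg_le
  have hdiff := differentiable_levyExponent hν
  set B := Real.exp (levyM ν 0 ζ + |x| * ζ) * K with hB
  refine integral_eq_integral_add_mul_I (F := fun z => cexp (I * x * z + levyExponent ν z))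
    (g := fun y => B * (1 + y ^ 2)⁻¹) (by fun_prop) (integrable_inv_one_add_sq.const_mul B)
    (by simpa using tendsto_inv_one_add_sq_cocompact.const_mul B) fun η hη y => ?_
  rw [uIcc_of_le hζ] at hη
  have hlinear : -(x * η) ≤ |x| * ζ := by
    calc -(x * η) = -x * η := by ring
      _ ≤ |x| * ζ := mul_le_mul (neg_le_abs x) hη.2 hη.1 (abs_nonneg x)
  have hexponent : levyM ν 0 η - x * η ≤ levyM ν 0 ζ + |x| * ζ := by
    linarith [levyM_zero_mono hν hη.1 hη.2]
  rw [norm_cexp_I_mul_add_levyExponent hν, hB, mul_assoc]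
  gcongr
  exact hK η hη.1 y

-- At the saddle point the phase `(x - M₁(ζ)) y` of the shifted integrand vanishes.
theorem integral_cexp_levyExponent_saddlePoint (hν : HasExpMoments ν)
    (hdecay : HasUniformRapidDecay ν) {x ζ : ℝ} (hζ : 0 ≤ ζ) (hsaddle : levyM ν 1 ζ = x) :
    ∫ z : ℝ, cexp (I * x * z + levyExponent ν z)
      = Real.exp (levyM ν 0 ζ - x * ζ) * ∫ y : ℝ, cexp (tiltedExponent ν ζ y) := by
  rw [integral_cexp_levyExponent_shift hν hdecay x hζ, ← integral_const_mul]
  congr 1 with y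
  rw [I_mul_add_levyExponent hν, hsaddle, sub_self, zero_mul, ofReal_zero, zero_mul, add_zero,
    Complex.exp_add, ofReal_exp]

end FourierInversion

section LaplaceMethod

variable {ν : Measure ℝ}

theorem tiltedDamping_le (hν : HasExpMoments ν) (ζ y : ℝ) :
    tiltedDamping ν ζ y ≤ y ^ 2 * levyM ν 2 ζ := by
  rw [levyM_of_two_le ν le_rfl, ← integral_const_mul]
  refine integral_mono (hν.integrable_tiltedDamping ζ y)
    ((hν.integrable_pow_mul_exp le_rfl ζ).const_mul _) fun v => ?_
  calc Real.exp (ζ * v) * (1 - Real.cos (y * v)) ≤ Real.exp (ζ * v) * (y * v) ^ 2 := by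
        gcongr
        exact one_sub_cos_le_sq _
    _ = _ := by ring

theorem le_tiltedDamping (hν : HasExpMoments ν) (ζ y : ℝ) :
    y ^ 2 / 2 * levyM ν 2 ζ - y ^ 4 / 2 * levyM ν 4 ζ ≤ tiltedDamping ν ζ y := by
  have h2 := (hν.integrable_pow_mul_exp le_rfl ζ).const_mul (y ^ 2 / 2)
  have h4 := (hν.integrable_pow_mul_exp (k := 4) (by norm_num) ζ).const_mul (y ^ 4 / 2)
  rw [levyM_of_two_le ν le_rfl, levyM_of_two_le ν (by norm_num), ← integral_const_mul,
    ← integral_const_mul, ← integral_sub h2 h4]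
  refine integral_mono (h2.sub h4) (hν.integrable_tiltedDamping ζ y) fun v => ?_
  calc y ^ 2 / 2 * (v ^ 2 * Real.exp (ζ * v)) - y ^ 4 / 2 * (v ^ 4 * Real.exp (ζ * v))
      = Real.exp (ζ * v) * ((y * v) ^ 2 / 2 - (y * v) ^ 4 / 2) := by ring
    _ ≤ _ := mul_le_mul_of_nonneg_left (sq_sub_pow_four_le_one_sub_cos _) (Real.exp_pos _).le

theorem sq_integral_abs_cube_mul_exp_le (hν : HasExpMoments ν) (ζ : ℝ) :
    (∫ v, |v| ^ 3 * Real.exp (ζ * v) ∂ν) ^ 2 ≤ levyM ν 2 ζ * levyM ν 4 ζ := by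
  have h2 := hν.integrable_pow_mul_exp le_rfl ζ
  have h3 := hν.integrable_abs_pow_mul_exp (k := 3) (by norm_num) ζ
  have h4 := hν.integrable_pow_mul_exp (k := 4) (by norm_num) ζ
  have hquadratic : ∀ t : ℝ, 0 ≤ levyM ν 2 ζ * (t * t)
      + (-2 * ∫ v, |v| ^ 3 * Real.exp (ζ * v) ∂ν) * t + levyM ν 4 ζ := fun t => by
    calc 0 ≤ ∫ v, (t - |v|) ^ 2 * v ^ 2 * Real.exp (ζ * v) ∂ν :=
          integral_nonneg fun v => by positivity
      _ = ∫ v, t * t * (v ^ 2 * Real.exp (ζ * v)) - 2 * t * (|v| ^ 3 * Real.exp (ζ * v))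
            + v ^ 4 * Real.exp (ζ * v) ∂ν := by
          congr 1 with v
          rw [← sq_abs v, show v ^ 4 = |v| ^ 4 from (Even.pow_abs (by decide) v).symm]
          ring
      _ = _ := by
          have h23 : Integrable (fun v => t * t * (v ^ 2 * Real.exp (ζ * v))
              - 2 * t * (|v| ^ 3 * Real.exp (ζ * v))) ν := (h2.const_mul _).sub (h3.const_mul _)
          rw [integral_add h23 h4, integral_sub (h2.const_mul _) (h3.const_mul _),
            integral_const_mul, integral_const_mul, levyM_of_two_le ν le_rfl,
            levyM_of_two_le ν (by norm_num)]
          ring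
  have hdiscrim := discrim_le_zero hquadratic
  rw [discrim] at hdiscrim
  linarith

theorem norm_tiltedExponent_add_le (hν : HasExpMoments ν) (ζ y : ℝ) :
    ‖tiltedExponent ν ζ y + ((y ^ 2 / 2 * levyM ν 2 ζ : ℝ) : ℂ)‖
      ≤ 4 * |y| ^ 3 * √(levyM ν 2 ζ * levyM ν 4 ζ) := by
  have hquadratic : Integrable (fun v => ((y ^ 2 / 2 * (v ^ 2 * Real.exp (ζ * v)) : ℝ) : ℂ)) ν :=
    ((hν.integrable_pow_mul_exp le_rfl ζ).const_mul _).ofReal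
  have hcube : ‖tiltedExponent ν ζ y + ((y ^ 2 / 2 * levyM ν 2 ζ : ℝ) : ℂ)‖
      ≤ ∫ v, 4 * |y| ^ 3 * (|v| ^ 3 * Real.exp (ζ * v)) ∂ν := by
    rw [levyM_of_two_le ν le_rfl, ← integral_const_mul, ← integral_complex_ofReal, tiltedExponent,
      ← integral_add (hν.integrable_tiltedExponent ζ y) hquadratic]
    refine norm_integral_le_of_norm_le
      ((hν.integrable_abs_pow_mul_exp (by norm_num) ζ).const_mul _)
      (Eventually.of_forall fun v => ?_)
    calc _ = ‖(Real.exp (ζ * v) : ℂ) * (cexp (-(I * ((y * v : ℝ) : ℂ))) - 1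
            + I * ((y * v : ℝ) : ℂ) + ((y * v : ℝ) : ℂ) ^ 2 / 2)‖ := by
          congr 1
          push_cast
          ring
      _ ≤ Real.exp (ζ * v) * (4 * |y * v| ^ 3) := by
          rw [norm_mul, norm_real, Real.norm_eq_abs, Real.abs_exp]
          gcongr
          exact norm_exp_neg_I_mul_sub_taylor_le _
      _ = _ := by rw [abs_mul]; ring
  rw [integral_const_mul] at hcube
  refine hcube.trans ?_
  gcongr
  exact Real.le_sqrt_of_sq_le (sq_integral_abs_cube_mul_exp_le hν ζ)

/-- The frequencies at which `M₂(ζ) y² / 2` dominates the quartic correction `M₄(ζ) y⁴`, so that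
the tilted characteristic function is controlled by a Gaussian. -/
def centralWindow (ν : Measure ℝ) (ζ : ℝ) : Set ℝ :=
  {y | 2 * y ^ 2 * levyM ν 4 ζ ≤ levyM ν 2 ζ}

theorem measurableSet_centralWindow (ν : Measure ℝ) (ζ : ℝ) :
    MeasurableSet (centralWindow ν ζ) :=
  measurableSet_le (by fun_prop) measurable_const

theorem le_tiltedDamping_of_mem_centralWindow (hν : HasExpMoments ν) {ζ y : ℝ}
    (hy : y ∈ centralWindow ν ζ) : y ^ 2 / 4 * levyM ν 2 ζ ≤ tiltedDamping ν ζ y := by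
  have hwindow := mul_le_mul_of_nonneg_left (mem_ofPred.1 hy) (sq_nonneg y)
  linarith [le_tiltedDamping hν ζ y]

theorem tendsto_tiltedExponent_div_sqrt (hν : HasExpMoments ν)
    (hpos : ∀ᶠ ζ in atTop, 0 < levyM ν 2 ζ)
    (hkurtosis : Tendsto (fun ζ => levyM ν 4 ζ / levyM ν 2 ζ ^ 2) atTop (𝓝 0)) (t : ℝ) :
    Tendsto (fun ζ => tiltedExponent ν ζ (t / √(levyM ν 2 ζ))) atTop
      (𝓝 ((-(1 / 2) * t ^ 2 : ℝ) : ℂ)) := by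
  rw [tendsto_iff_norm_sub_tendsto_zero]
  have hbound :
      Tendsto (fun ζ => 4 * |t| ^ 3 * √(levyM ν 4 ζ / levyM ν 2 ζ ^ 2)) atTop (𝓝 0) := by
    simpa using hkurtosis.sqrt.const_mul (4 * |t| ^ 3)
  refine squeeze_zero' (Eventually.of_forall fun _ => norm_nonneg _) ?_ hbound
  filter_upwards [hpos] with ζ hM
  have h := norm_tiltedExponent_add_le hν ζ (t / √(levyM ν 2 ζ))
  have hsq : (t / √(levyM ν 2 ζ)) ^ 2 / 2 * levyM ν 2 ζ = 1 / 2 * t ^ 2 := by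
    rw [div_pow, Real.sq_sqrt hM.le]
    field_simp
  calc _ ≤ 4 * |t / √(levyM ν 2 ζ)| ^ 3 * √(levyM ν 2 ζ * levyM ν 4 ζ) := by
        rwa [neg_mul, ofReal_neg, sub_neg_eq_add, ← hsq]
    _ = _ := by
        rw [abs_div, abs_of_nonneg (Real.sqrt_nonneg _), Real.sqrt_mul hM.le,
          Real.sqrt_div' _ (sq_nonneg _), Real.sqrt_sq hM.le, div_pow,
          show √(levyM ν 2 ζ) ^ 3 = levyM ν 2 ζ * √(levyM ν 2 ζ) by
            rw [pow_succ, Real.sq_sqrt hM.le]]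
        have := Real.sqrt_pos.2 hM
        field_simp

theorem eventually_div_sqrt_mem_centralWindow (hpos : ∀ᶠ ζ in atTop, 0 < levyM ν 2 ζ)
    (hkurtosis : Tendsto (fun ζ => levyM ν 4 ζ / levyM ν 2 ζ ^ 2) atTop (𝓝 0)) (t : ℝ) :
    ∀ᶠ ζ in atTop, t / √(levyM ν 2 ζ) ∈ centralWindow ν ζ := by
  have hsmall : ∀ᶠ ζ in atTop, 2 * t ^ 2 * (levyM ν 4 ζ / levyM ν 2 ζ ^ 2) < 1 := by
    have h := hkurtosis.const_mul (2 * t ^ 2)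
    rw [mul_zero] at h
    exact h.eventually_lt_const one_pos
  filter_upwards [hsmall, hpos] with ζ hζ hM
  have hscale := mul_le_mul_of_nonneg_right hζ.le hM.le
  rw [centralWindow, mem_ofPred, div_pow, Real.sq_sqrt hM.le]
  calc _ = 2 * t ^ 2 * (levyM ν 4 ζ / levyM ν 2 ζ ^ 2) * levyM ν 2 ζ := by field_simp
    _ ≤ _ := by simpa using hscale

theorem integral_gaussian_half : ∫ t : ℝ, Real.exp (-(1 / 2) * t ^ 2) = √(2 * Real.pi) := by
  rw [integral_gaussian]
  congr 1
  field_simp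

theorem tendsto_sqrt_mul_integral_centralWindow (hν : HasExpMoments ν)
    (hpos : ∀ᶠ ζ in atTop, 0 < levyM ν 2 ζ)
    (hkurtosis : Tendsto (fun ζ => levyM ν 4 ζ / levyM ν 2 ζ ^ 2) atTop (𝓝 0)) :
    Tendsto (fun ζ => (√(levyM ν 2 ζ) : ℂ) * ∫ y in centralWindow ν ζ, cexp (tiltedExponent ν ζ y))
      atTop (𝓝 (√(2 * Real.pi) : ℂ)) := by
  have hmeas : ∀ ζ, Measurable fun y => cexp (tiltedExponent ν ζ y) := fun ζ =>
    (continuous_tiltedExponent hν ζ).cexp.measurable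
  have hrescale : ∀ ζ, (√(levyM ν 2 ζ) : ℂ) *
      (∫ y in centralWindow ν ζ, cexp (tiltedExponent ν ζ y))
      = ∫ t, (centralWindow ν ζ).indicator (fun y => cexp (tiltedExponent ν ζ y))
          (t / √(levyM ν 2 ζ)) := fun ζ => by
    rw [Measure.integral_comp_div, integral_indicator (measurableSet_centralWindow ν ζ),
      abs_of_nonneg (Real.sqrt_nonneg _), real_smul]
  simp_rw [hrescale]
  rw [← integral_gaussian_half, ← integral_complex_ofReal]
  refine tendsto_integral_filter_of_dominated_convergence
    (fun t => Real.exp (-(1 / 4) * t ^ 2)) (Eventually.of_forall fun ζ => ?_) ?_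
    (integrable_exp_neg_mul_sq (by norm_num)) (Eventually.of_forall fun t => ?_)
  · exact (((hmeas ζ).indicator (measurableSet_centralWindow ν ζ)).comp
      (measurable_id.div_const _)).aestronglyMeasurable
  · filter_upwards [hpos] with ζ hM
    refine Eventually.of_forall fun t => ?_
    by_cases ht : t / √(levyM ν 2 ζ) ∈ centralWindow ν ζ
    · have hdamp := le_tiltedDamping_of_mem_centralWindow hν ht
      rw [div_pow, Real.sq_sqrt hM.le] at hdamp
      rw [indicator_of_mem ht, norm_cexp_tiltedExponent hν, Real.exp_le_exp]
      calc _ ≤ -(t ^ 2 / levyM ν 2 ζ / 4 * levyM ν 2 ζ) := neg_le_neg hdamp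
        _ = _ := by field_simp
    · rw [indicator_of_notMem ht, norm_zero]
      positivity
  · rw [ofReal_exp]
    refine (tendsto_tiltedExponent_div_sqrt hν hpos hkurtosis t).cexp.congr' ?_
    filter_upwards [eventually_div_sqrt_mem_centralWindow hpos hkurtosis t] with ζ hζ
    rw [indicator_of_mem hζ]

theorem exists_norm_setIntegral_cexp_tiltedExponent_le (hν : HasExpMoments ν)
    (hdecay : HasUniformRapidDecay ν) :
    ∃ D : ℝ, 0 ≤ D ∧ ∀ ζ : ℝ, 0 ≤ ζ → ∀ (S : Set ℝ) (L : ℝ), MeasurableSet S →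
      (∀ y ∈ S, L ≤ tiltedDamping ν ζ y) →
        ‖∫ y in S, cexp (tiltedExponent ν ζ y)‖ ≤ Real.exp (-L / 2) * D := by
  obtain ⟨K, hK⟩ := hdecay 2
  have hint : Integrable fun y : ℝ => √K * (1 + y ^ 2)⁻¹ := integrable_inv_one_add_sq.const_mul _
  refine ⟨∫ y : ℝ, √K * (1 + y ^ 2)⁻¹, integral_nonneg fun y => by positivity,
    fun ζ hζ S L hS hL => ?_⟩
  have hhalf : ∀ y, Real.exp (-tiltedDamping ν ζ y / 2) ≤ √K * (1 + y ^ 2)⁻¹ := fun y => by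
    rw [Real.exp_half]
    refine (Real.sqrt_le_sqrt (hK ζ hζ y)).trans_eq ?_
    rw [Real.sqrt_mul' _ (by positivity), Real.sqrt_inv, Real.sqrt_sq (by positivity)]
  calc ‖∫ y in S, cexp (tiltedExponent ν ζ y)‖
      ≤ ∫ y in S, Real.exp (-L / 2) * (√K * (1 + y ^ 2)⁻¹) := by
        refine norm_integral_le_of_norm_le (hint.const_mul _).integrableOn ?_
        filter_upwards [ae_restrict_mem hS] with y hy
        rw [norm_cexp_tiltedExponent hν, ← add_halves (-tiltedDamping ν ζ y), Real.exp_add]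
        have := hL y hy
        gcongr
        exact hhalf y
    _ ≤ ∫ y : ℝ, Real.exp (-L / 2) * (√K * (1 + y ^ 2)⁻¹) :=
        setIntegral_le_integral (hint.const_mul _) (Eventually.of_forall fun y => by positivity)
    _ = _ := integral_const_mul _ _

theorem tendsto_exp_exp_sub_exp {a b : ℝ} (ha : 0 < a) (hb : 0 < b) :
    Tendsto (fun ζ => Real.exp (Real.exp (a * ζ) / 2 - b * Real.exp (2 * a * ζ))) atTop
      (𝓝 0) := by
  have hexp : Tendsto (fun ζ => Real.exp (a * ζ)) atTop atTop :=
    Real.tendsto_exp_atTop.comp (tendsto_id.const_mul_atTop ha)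
  have hquadratic : Tendsto (fun X : ℝ => X * (1 / 2 + -(b * X))) atTop atBot :=
    tendsto_id.atTop_mul_atBot₀ (tendsto_atBot_add_const_left _ _
      (tendsto_neg_atTop_atBot.comp (tendsto_id.const_mul_atTop hb)))
  refine (Real.tendsto_exp_atBot.comp (hquadratic.comp hexp)).congr fun ζ => ?_
  simp only [Function.comp_apply]
  rw [show 2 * a * ζ = a * ζ + a * ζ by ring, Real.exp_add]
  ring_nf

/-- The conditions on a Lévy measure under which the saddle point method applies: the tilted
characteristic functions decay rapidly, become Gaussian on the scale `M₂(ζ)^(-1/2)`, and are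
exponentially damped in `ζ` away from the origin, while `M₂` and `M₄ / M₂` grow slowly enough for
this damping to absorb them. -/
structure IsSaddlePointRegular (ν : Measure ℝ) : Prop where
  hasExpMoments : HasExpMoments ν
  rapidDecay : HasUniformRapidDecay ν
  exists_le_tiltedDamping : ∃ c > 0, ∃ δ > 0, ∀ ζ : ℝ, 0 ≤ ζ → ∀ y : ℝ,
    c * Real.exp (δ * ζ) * min 1 (y ^ 2) ≤ tiltedDamping ν ζ y
  tendsto_kurtosis : Tendsto (fun ζ => levyM ν 4 ζ / levyM ν 2 ζ ^ 2) atTop (𝓝 0)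
  isBigO_levyM_four : ∀ ε > 0, levyM ν 4 =O[atTop] fun ζ => Real.exp (ε * ζ) * levyM ν 2 ζ
  isBigO_levyM_two : ∀ ε > 0, levyM ν 2 =O[atTop] fun ζ => Real.exp (Real.exp (ε * ζ))

namespace IsSaddlePointRegular

theorem levyM_two_pos (hν : IsSaddlePointRegular ν) {ζ : ℝ} (hζ : 0 ≤ ζ) :
    0 < levyM ν 2 ζ := by
  obtain ⟨c, hc, δ, -, hdamp⟩ := hν.exists_le_tiltedDamping
  have hone := (hdamp ζ hζ 1).trans (tiltedDamping_le hν.hasExpMoments ζ 1)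
  simp only [one_pow, min_self, mul_one, one_mul] at hone
  exact lt_of_lt_of_le (by positivity) hone

theorem exists_le_tiltedDamping_of_notMem_centralWindow (hν : IsSaddlePointRegular ν) :
    ∃ b > 0, ∃ a > 0, ∀ᶠ ζ in atTop, ∀ y ∉ centralWindow ν ζ,
      b * Real.exp (2 * a * ζ) ≤ tiltedDamping ν ζ y := by
  obtain ⟨c, hc, δ, hδ, hdamp⟩ := hν.exists_le_tiltedDamping
  obtain ⟨C, hC, hfour⟩ := (hν.isBigO_levyM_four (δ / 2) (by positivity)).exists_pos
  refine ⟨c * min 1 (1 / (2 * C)), by positivity, δ / 4, by positivity, ?_⟩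
  filter_upwards [hfour.bound, eventually_ge_atTop 0] with ζ hM4 hζ y hy
  have hM2 := hν.levyM_two_pos hζ
  rw [Real.norm_of_nonneg (levyM_even_nonneg (by decide) ν ζ),
    Real.norm_of_nonneg (by positivity)] at hM4
  have hy_large : 1 < 2 * y ^ 2 * (C * Real.exp (δ / 2 * ζ)) := by
    refine lt_of_mul_lt_mul_right ?_ hM2.le
    calc 1 * levyM ν 2 ζ < 2 * y ^ 2 * levyM ν 4 ζ := by simpa [centralWindow] using hy
      _ ≤ 2 * y ^ 2 * (C * (Real.exp (δ / 2 * ζ) * levyM ν 2 ζ)) := by gcongr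
      _ = _ := by ring
  have hmin : min 1 (1 / (2 * C)) ≤ Real.exp (δ / 2 * ζ) * min 1 (y ^ 2) := by
    rw [mul_min_of_nonneg _ _ (Real.exp_pos _).le, mul_one]
    refine min_le_min (Real.one_le_exp (by positivity)) ?_
    rw [div_le_iff₀ (by positivity)]
    linarith
  calc c * min 1 (1 / (2 * C)) * Real.exp (2 * (δ / 4) * ζ)
      ≤ c * (Real.exp (δ / 2 * ζ) * min 1 (y ^ 2)) * Real.exp (2 * (δ / 4) * ζ) := by gcongr
    _ = c * Real.exp (δ * ζ) * min 1 (y ^ 2) := by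
        rw [show δ * ζ = δ / 2 * ζ + 2 * (δ / 4) * ζ by ring, Real.exp_add]
        ring
    _ ≤ _ := hdamp ζ hζ y

theorem tendsto_sqrt_mul_integral_compl_centralWindow (hν : IsSaddlePointRegular ν) :
    Tendsto (fun ζ => (√(levyM ν 2 ζ) : ℂ) *
      ∫ y in (centralWindow ν ζ)ᶜ, cexp (tiltedExponent ν ζ y)) atTop (𝓝 0) := by
  obtain ⟨D, _, htail⟩ :=
    exists_norm_setIntegral_cexp_tiltedExponent_le hν.hasExpMoments hν.rapidDecay
  obtain ⟨b, hb, a, ha, hdamp⟩ := hν.exists_le_tiltedDamping_of_notMem_centralWindow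
  obtain ⟨C, hC, htwo⟩ := (hν.isBigO_levyM_two a ha).exists_pos
  have hlim := (tendsto_exp_exp_sub_exp ha (half_pos hb)).const_mul (√C * D)
  rw [mul_zero] at hlim
  refine squeeze_zero_norm' ?_ hlim
  filter_upwards [hdamp, htwo.bound, eventually_ge_atTop 0] with ζ hdampζ hM2 hζ
  rw [Real.norm_of_nonneg (hν.levyM_two_pos hζ).le, Real.norm_of_nonneg (Real.exp_pos _).le] at hM2
  rw [norm_mul, norm_real, Real.norm_of_nonneg (Real.sqrt_nonneg _)]
  calc _ ≤ √C * Real.exp (Real.exp (a * ζ) / 2)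
        * (Real.exp (-(b * Real.exp (2 * a * ζ)) / 2) * D) := by
        gcongr
        · rw [Real.exp_half, ← Real.sqrt_mul hC.le]
          exact Real.sqrt_le_sqrt hM2
        · exact htail ζ hζ _ _ (measurableSet_centralWindow ν ζ).compl hdampζ
    _ = _ := by
        rw [sub_eq_add_neg, Real.exp_add]
        ring_nf

theorem tendsto_sqrt_mul_integral_cexp_tiltedExponent (hν : IsSaddlePointRegular ν) :
    Tendsto (fun ζ => (√(levyM ν 2 ζ) : ℂ) * ∫ y, cexp (tiltedExponent ν ζ y)) atTop
      (𝓝 (√(2 * Real.pi) : ℂ)) := by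
  obtain ⟨K, hK⟩ := hν.rapidDecay.exists_exp_neg_le
  have hint : ∀ ζ : ℝ, 0 ≤ ζ → Integrable fun y => cexp (tiltedExponent ν ζ y) := fun ζ hζ =>
    (integrable_inv_one_add_sq.const_mul K).mono'
      (continuous_tiltedExponent hν.hasExpMoments ζ).cexp.aestronglyMeasurable
      (Eventually.of_forall fun y =>
        (norm_cexp_tiltedExponent hν.hasExpMoments ζ y).trans_le (hK ζ hζ y))
  have hpos : ∀ᶠ ζ in atTop, 0 < levyM ν 2 ζ :=
    (eventually_ge_atTop 0).mono fun _ => hν.levyM_two_pos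
  have hsum := (tendsto_sqrt_mul_integral_centralWindow hν.hasExpMoments hpos
    hν.tendsto_kurtosis).add hν.tendsto_sqrt_mul_integral_compl_centralWindow
  rw [add_zero] at hsum
  refine hsum.congr' ?_
  filter_upwards [eventually_ge_atTop 0] with ζ hζ
  rw [← mul_add, integral_add_compl (measurableSet_centralWindow ν ζ) (hint ζ hζ)]

theorem tendsto_density_mul (hν : IsSaddlePointRegular ν) {ζ p : ℝ → ℝ}
    (hζ : ∀ᶠ x in atTop, 0 ≤ ζ x ∧ levyM ν 1 (ζ x) = x)
    (hp : ∀ x : ℝ, p x =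
      1 / (2 * Real.pi) * (∫ z : ℝ, cexp (I * x * z + levyExponent ν z)).re) :
    Tendsto (fun x => p x * √(2 * Real.pi * levyM ν 2 (ζ x))
      * Real.exp (x * ζ x - levyM ν 0 (ζ x))) atTop (𝓝 1) := by
  have hζ_top := tendsto_atTop_of_levyM_one_eq hν.hasExpMoments (hζ.mono fun _ h => h.2)
  have hlim := (((continuous_re.tendsto _).comp
    hν.tendsto_sqrt_mul_integral_cexp_tiltedExponent).comp hζ_top).const_mul
      (√(2 * Real.pi) / (2 * Real.pi))
  have hone : √(2 * Real.pi) / (2 * Real.pi) * (√(2 * Real.pi) : ℂ).re = 1 := by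
    rw [ofReal_re, div_mul_eq_mul_div, Real.mul_self_sqrt (by positivity)]
    exact div_self (by positivity)
  rw [hone] at hlim
  refine hlim.congr' ?_
  filter_upwards [hζ] with x hx
  rw [hp, integral_cexp_levyExponent_saddlePoint hν.hasExpMoments hν.rapidDecay hx.1 hx.2,
    Function.comp_apply, Function.comp_apply, re_ofReal_mul, re_ofReal_mul,
    Real.sqrt_mul (by positivity) (levyM ν 2 (ζ x)), ← neg_sub (x * ζ x), Real.exp_neg]
  have := Real.exp_pos (x * ζ x - levyM ν 0 (ζ x))
  field_simp

end IsSaddlePointRegular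

end LaplaceMethod

section KernelMeasure

/-- The Lévy measure of the stochastic integral `∫_I f(s) dZ_s`, where `Z` has Lévy measure `μ`:
the image of `ds ⊗ μ(du)` on `I × ℝ` under `(s, u) ↦ f(s) u`. -/
noncomputable def kernelMeasure (μ : Measure ℝ) (I : Set ℝ) (f : ℝ → ℝ) : Measure ℝ :=
  ((volume.restrict I).prod μ).map fun q => f q.1 * q.2

variable {μ : Measure ℝ} {T : Set ℝ} {f : ℝ → ℝ}

theorem integrable_kernelMeasure_iff (hf : Measurable f) {E : Type*} [NormedAddCommGroup E]
    {g : ℝ → E} (hg : AEStronglyMeasurable g (kernelMeasure μ T f)) :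
    Integrable g (kernelMeasure μ T f)
      ↔ Integrable (fun q : ℝ × ℝ => g (f q.1 * q.2)) ((volume.restrict T).prod μ) :=
  integrable_map_measure hg (by fun_prop)

theorem HasExpMoments.kernelMeasure [SFinite μ] (hμ : HasExpMoments μ) (hf : Measurable f)
    {B : ℝ} (hT : MeasurableSet T) (hbound : ∀ s ∈ T, |f s| ≤ B)
    (hsq : IntegrableOn (fun s => f s ^ 2) T) : HasExpMoments (kernelMeasure μ T f) := by
  intro C
  rw [integrable_kernelMeasure_iff hf (by fun_prop)]
  refine (hsq.integrable.mul_prod (hμ (|C| * B))).mono' (by fun_prop) ?_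
  filter_upwards [Measure.quasiMeasurePreserving_fst.ae (ae_restrict_mem hT)] with q hq
  rw [Real.norm_of_nonneg (by positivity), mul_pow, mul_assoc, abs_mul]
  have hexponent : C * (|f q.1| * |q.2|) ≤ |C| * B * |q.2| := by
    rw [mul_assoc |C|]
    gcongr
    · exact le_abs_self C
    · exact hbound _ hq
  gcongr

variable [SFinite μ]

theorem integral_kernelMeasure (hf : Measurable f) {E : Type*} [NormedAddCommGroup E]
    [NormedSpace ℝ E] {g : ℝ → E} (hg : Integrable g (kernelMeasure μ T f)) :
    ∫ v, g v ∂kernelMeasure μ T f = ∫ s in T, ∫ u, g (f s * u) ∂μ := by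
  rw [kernelMeasure, integral_map (by fun_prop) hg.1,
    integral_prod _ ((integrable_kernelMeasure_iff hf hg.1).1 hg)]

theorem kernelM_eq_levyM (hf : Measurable f) (hν : HasExpMoments (kernelMeasure μ T f)) (k : ℕ)
    (ζ : ℝ) : kernelM μ T f k ζ = levyM (kernelMeasure μ T f) k ζ := by
  rw [levyM_eq_integral, integral_kernelMeasure hf (hν.integrable_levyIntegrand k ζ)]
  simp only [kernelM, levyIntegrand_mul, integral_const_mul, levyM_eq_integral]

theorem integrableOn_pow_mul_levyM (hf : Measurable f)
    (hν : HasExpMoments (kernelMeasure μ T f)) (k : ℕ) (ζ : ℝ) :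
    IntegrableOn (fun s => f s ^ k * levyM μ k (f s * ζ)) T := by
  have hg := hν.integrable_levyIntegrand k ζ
  simpa only [levyIntegrand_mul, integral_const_mul, ← levyM_eq_integral, IntegrableOn]
    using ((integrable_kernelMeasure_iff hf hg.1).1 hg).integral_prod_left

theorem kernelPsi_eq_levyExponent (hf : Measurable f)
    (hν : HasExpMoments (kernelMeasure μ T f)) (z : ℂ) :
    kernelPsi μ T f z = levyExponent (kernelMeasure μ T f) z :=
  (integral_kernelMeasure hf (hν.integrable_levyExponent z)).symm

theorem measureReal_mul_exp_mul_le_tiltedDamping (hf : Measurable f)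
    (hν : HasExpMoments (kernelMeasure μ T f)) {J : Set ℝ} (hJ : MeasurableSet J) (hJT : J ⊆ T)
    {a δ ζ y L : ℝ} (ha : 0 ≤ a) (hfJ : ∀ s ∈ J, a ≤ f s) (hδ : 0 ≤ δ) (hfin : μ (Ioi δ) ≠ ⊤)
    (hζ : 0 ≤ ζ) (hL : ∀ u, δ < u → L ≤ ∫ s in J, (1 - Real.cos (y * u * f s))) :
    μ.real (Ioi δ) * (Real.exp (a * δ * ζ) * L) ≤ tiltedDamping (kernelMeasure μ T f) ζ y := by
  set F : ℝ × ℝ → ℝ := fun q => Real.exp (ζ * (f q.1 * q.2)) * (1 - Real.cos (y * (f q.1 * q.2)))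
  set G : ℝ × ℝ → ℝ := fun q => Real.exp (a * δ * ζ) * (1 - Real.cos (y * q.2 * f q.1)) with hG
  have hdamp := hν.integrable_tiltedDamping ζ y
  have hF : Integrable F ((volume.restrict T).prod μ) :=
    (integrable_kernelMeasure_iff hf hdamp.1).1 hdamp
  have hF_nonneg : ∀ q, 0 ≤ F q := fun q =>
    mul_nonneg (Real.exp_pos _).le (one_sub_cos_nonneg _)
  have hrestrict : ((volume.restrict T).prod μ).restrict (J ×ˢ Ioi δ)
      = (volume.restrict J).prod (μ.restrict (Ioi δ)) := by
    rw [← Measure.prod_restrict, Measure.restrict_restrict_of_subset hJT]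
  have hGF : ∀ q ∈ J ×ˢ Ioi δ, G q ≤ F q := fun q hq => by
    simp only [F, G]
    rw [show y * q.2 * f q.1 = y * (f q.1 * q.2) by ring]
    exact exp_mul_one_sub_cos_le ha (hfJ _ hq.1) hδ (mem_Ioi.1 hq.2).le hζ _
  have hGF_ae : G ≤ᵐ[((volume.restrict T).prod μ).restrict (J ×ˢ Ioi δ)] F :=
    ae_restrict_of_forall_mem (hJ.prod measurableSet_Ioi) hGF
  have hG_int : IntegrableOn G (J ×ˢ Ioi δ) ((volume.restrict T).prod μ) := by
    refine hF.integrableOn.mono' (by fun_prop) (hGF_ae.mono fun q hq => ?_)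
    rwa [Real.norm_of_nonneg (mul_nonneg (Real.exp_pos _).le (one_sub_cos_nonneg _))]
  have hG_prod := hG_int
  rw [IntegrableOn, hrestrict] at hG_prod
  calc μ.real (Ioi δ) * (Real.exp (a * δ * ζ) * L)
      ≤ ∫ u in Ioi δ, (∫ s in J, G (s, u)) ∂μ := by
        refine setIntegral_ge_of_const_le measurableSet_Ioi hfin (fun u hu => ?_)
          hG_prod.integral_prod_right
        rw [hG, integral_const_mul]
        exact mul_le_mul_of_nonneg_left (hL u hu) (Real.exp_pos _).le
    _ = ∫ q in J ×ˢ Ioi δ, G q ∂(volume.restrict T).prod μ := by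
        rw [hrestrict, integral_prod_symm _ hG_prod]
    _ ≤ ∫ q in J ×ˢ Ioi δ, F q ∂(volume.restrict T).prod μ :=
        integral_mono_ae hG_int hF.integrableOn hGF_ae
    _ ≤ ∫ q, F q ∂(volume.restrict T).prod μ :=
        setIntegral_le_integral hF (Eventually.of_forall hF_nonneg)
    _ = tiltedDamping (kernelMeasure μ T f) ζ y :=
        (integral_map (by fun_prop) hdamp.1).symm

end KernelMeasure

section LevyMeasure

variable {μ : Measure ℝ}

theorem sigmaFinite_of_integrable_of_ae_ne_zero {α E : Type*} [MeasurableSpace α] {ρ : Measure α}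
    [NormedAddCommGroup E] {g : α → E} (hg : Integrable g ρ) (hne : ∀ᵐ x ∂ρ, g x ≠ 0) :
    SigmaFinite ρ := by
  obtain ⟨t, -, hzero, hfinite⟩ := hg.aefinStronglyMeasurable.exists_set_sigmaFinite
  have hcompl : ρ tᶜ = 0 := by
    rw [← Measure.restrict_eq_zero, ← ae_eq_bot, ← eventually_false_iff_eq_bot]
    filter_upwards [hzero, ae_restrict_of_ae hne] with x hx hx'
    exact hx' hx
  rwa [Measure.restrict_eq_self_of_ae_mem (mem_ae_iff.2 hcompl)] at hfinite

theorem sigmaFinite_of_integrable_min_sq (hμ0 : μ {0} = 0)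
    (hμint : Integrable (fun u : ℝ => min 1 (u ^ 2)) μ) : SigmaFinite μ := by
  refine sigmaFinite_of_integrable_of_ae_ne_zero hμint ?_
  filter_upwards [compl_mem_ae_iff.2 hμ0] with u hu
  have : u ≠ 0 := hu
  positivity

theorem hasExpMoments_of_integrable (hμint : Integrable (fun u : ℝ => min 1 (u ^ 2)) μ)
    (hμexp : ∀ C : ℝ, Integrable (fun u : ℝ => Real.exp (C * u)) (μ.restrict {u | 1 ≤ |u|})) :
    HasExpMoments μ := by
  intro C
  have hmeas : MeasurableSet {u : ℝ | 1 ≤ |u|} := measurableSet_le measurable_const measurable_norm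
  rw [← integrableOn_univ, ← union_compl_self {u : ℝ | 1 ≤ |u|}]
  refine IntegrableOn.union ?_ ?_
  · have hsum := ((hμexp (|C| + 1)).add (hμexp (-(|C| + 1)))).const_mul 2
    refine hsum.mono' (by fun_prop) (Eventually.of_forall fun u => ?_)
    have hsq : u ^ 2 ≤ 2 * Real.exp |u| := by
      linarith [Real.quadratic_le_exp_of_nonneg (abs_nonneg u), abs_nonneg u, sq_abs u]
    have hexp_abs : Real.exp ((|C| + 1) * |u|)
        ≤ Real.exp ((|C| + 1) * u) + Real.exp (-(|C| + 1) * u) := by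
      rcases abs_choice u with hu | hu <;> rw [hu]
      · exact le_add_of_nonneg_right (Real.exp_pos _).le
      · rw [mul_neg, ← neg_mul]
        exact le_add_of_nonneg_left (Real.exp_pos _).le
    rw [Real.norm_of_nonneg (by positivity)]
    calc u ^ 2 * Real.exp (C * |u|) ≤ 2 * Real.exp |u| * Real.exp (|C| * |u|) := by
          gcongr
          exact le_abs_self C
      _ = 2 * Real.exp ((|C| + 1) * |u|) := by
          rw [add_mul, one_mul, Real.exp_add]
          ring
      _ ≤ _ := mul_le_mul_of_nonneg_left hexp_abs two_pos.le
  · refine (hμint.integrableOn.const_mul (Real.exp |C|)).mono' (by fun_prop) ?_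
    filter_upwards [ae_restrict_mem hmeas.compl] with u hu
    have hu1 : |u| ≤ 1 := (not_le.1 (id hu : ¬ 1 ≤ |u|)).le
    rw [min_eq_right ((sq_le_one_iff_abs_le_one u).2 hu1), Real.norm_of_nonneg (by positivity),
      mul_comm]
    gcongr
    calc C * |u| ≤ |C| * 1 := by
          gcongr
          exact le_abs_self C
      _ = |C| := mul_one _

theorem HasExpMoments.measure_Ioi_ne_top (hμ : HasExpMoments μ) {δ : ℝ} (hδ : 0 < δ) :
    μ (Ioi δ) ≠ ⊤ := by
  have hsq : Integrable (fun u : ℝ => u ^ 2) μ := by simpa using hμ 0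
  refine ne_top_of_le_ne_top (hsq.measure_gt_lt_top (sq_pos_of_pos hδ)).ne
    (measure_mono fun u hu => ?_)
  exact pow_lt_pow_left₀ hu hδ.le two_ne_zero

theorem HasExpMoments.exists_le_measureReal_Ioi (hμ : HasExpMoments μ) (hμinf : μ (Ioi 0) = ⊤)
    (R : ℝ) : ∃ δ : ℝ, 0 < δ ∧ δ ≤ 1 ∧ R ≤ μ.real (Ioi δ) := by
  have hunion : Ioi (0 : ℝ) = ⋃ n : ℕ, Ioi (1 / ((n : ℝ) + 1)) := by
    ext u
    simp only [mem_iUnion, mem_Ioi]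
    exact ⟨exists_nat_one_div_lt, fun ⟨n, hn⟩ => lt_trans (by positivity) hn⟩
  have hmono : Monotone fun n : ℕ => Ioi (1 / ((n : ℝ) + 1)) := fun n m hnm =>
    Ioi_subset_Ioi (Nat.one_div_le_one_div hnm)
  have hlim := tendsto_measure_iUnion_atTop (μ := μ) hmono
  rw [← hunion, hμinf] at hlim
  obtain ⟨n, hn⟩ := (hlim.eventually (lt_mem_nhds (ENNReal.ofReal_lt_top (r := R)))).exists
  have hpos : 0 < 1 / ((n : ℝ) + 1) := by positivity
  refine ⟨1 / ((n : ℝ) + 1), hpos, ?_, ?_⟩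
  · simpa using Nat.one_div_le_one_div (α := ℝ) (Nat.zero_le n)
  · exact (ENNReal.ofReal_le_iff_le_toReal (hμ.measure_Ioi_ne_top hpos)).1 hn.le

theorem HasExpMoments.levyM_le_levyM_add (hμ : HasExpMoments μ) {k : ℕ} (hk : Even k)
    (hk2 : 2 ≤ k) {a b : ℝ} (ha : 0 ≤ a) (hab : a ≤ b) :
    levyM μ k a ≤ levyM μ k b + levyM μ k 0 := by
  simp only [levyM_of_two_le μ hk2]
  rw [← integral_add (hμ.integrable_pow_mul_exp hk2 b) (hμ.integrable_pow_mul_exp hk2 0)]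
  refine integral_mono (hμ.integrable_pow_mul_exp hk2 a)
    ((hμ.integrable_pow_mul_exp hk2 b).add (hμ.integrable_pow_mul_exp hk2 0)) fun v => ?_
  rw [← mul_add]
  refine mul_le_mul_of_nonneg_left ?_ (hk.pow_nonneg v)
  rcases le_total 0 v with hv | hv
  · refine le_add_of_le_of_nonneg ?_ (Real.exp_pos _).le
    gcongr
  · refine le_add_of_nonneg_of_le (Real.exp_pos _).le (Real.exp_le_exp.2 ?_)
    exact mul_le_mul_of_nonpos_right ha hv

theorem HasExpMoments.exists_levyM_le_add (hμ : HasExpMoments μ) {k : ℕ} (hk : Even k)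
    (hk2 : 2 ≤ k) {g : ℝ → ℝ} (hg : ∀ v, 0 ≤ v → 0 ≤ g v)
    (hle : ∀ᶠ v in atTop, levyM μ k v ≤ g v) :
    ∃ B, 0 ≤ B ∧ ∀ v, 0 ≤ v → levyM μ k v ≤ g v + B := by
  obtain ⟨X, hX⟩ := eventually_atTop.1 hle
  have hB : 0 ≤ levyM μ k X + levyM μ k 0 :=
    add_nonneg (levyM_even_nonneg hk μ X) (levyM_even_nonneg hk μ 0)
  refine ⟨levyM μ k X + levyM μ k 0, hB, fun v hv => ?_⟩
  rcases le_total X v with hXv | hvX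
  · exact le_add_of_le_of_nonneg (hX v hXv) hB
  · exact le_add_of_nonneg_of_le (hg v hv) (hμ.levyM_le_levyM_add hk hk2 hv hvX)

theorem HasExpMoments.exists_mul_exp_le_levyM_two (hμ : HasExpMoments μ) (hμinf : μ (Ioi 0) = ⊤) :
    ∃ κ > 0, ∃ δ > 0, ∀ b, 0 ≤ b → κ * Real.exp (δ * b) ≤ levyM μ 2 b := by
  obtain ⟨δ, hδ, -, hmass⟩ := hμ.exists_le_measureReal_Ioi hμinf 1
  have hmass_pos : 0 < μ.real (Ioi δ) := one_pos.trans_le hmass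
  refine ⟨μ.real (Ioi δ) * δ ^ 2, mul_pos hmass_pos (pow_pos hδ 2), δ, hδ, fun b hb => ?_⟩
  have hint := hμ.integrable_pow_mul_exp le_rfl b
  rw [levyM_of_two_le μ le_rfl]
  calc μ.real (Ioi δ) * δ ^ 2 * Real.exp (δ * b)
      = ∫ _ in Ioi δ, δ ^ 2 * Real.exp (b * δ) ∂μ := by
        rw [setIntegral_const, smul_eq_mul, mul_comm b, mul_assoc]
    _ ≤ ∫ v in Ioi δ, v ^ 2 * Real.exp (b * v) ∂μ := by
        refine setIntegral_mono_on (integrableOn_const (hμ.measure_Ioi_ne_top hδ))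
          hint.integrableOn measurableSet_Ioi fun v hv => ?_
        have hv : δ < v := hv
        gcongr
    _ ≤ ∫ v, v ^ 2 * Real.exp (b * v) ∂μ :=
        setIntegral_le_integral hint (Eventually.of_forall fun v => by positivity)

theorem HasExpMoments.tendsto_levyM_two_atTop (hμ : HasExpMoments μ) (hμinf : μ (Ioi 0) = ⊤) :
    Tendsto (levyM μ 2) atTop atTop := by
  obtain ⟨κ, hκ, δ, hδ, hle⟩ := hμ.exists_mul_exp_le_levyM_two hμinf
  exact tendsto_atTop_mono' _ ((eventually_ge_atTop 0).mono hle)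
    ((Real.tendsto_exp_atTop.comp (tendsto_id.const_mul_atTop hδ)).const_mul_atTop hκ)

theorem HasExpMoments.exists_pos_le_levyM_two (hμ : HasExpMoments μ) (hμinf : μ (Ioi 0) = ⊤) :
    ∃ κ > 0, ∀ b, 0 ≤ b → κ ≤ levyM μ 2 b := by
  obtain ⟨κ, hκ, δ, hδ, hle⟩ := hμ.exists_mul_exp_le_levyM_two hμinf
  refine ⟨κ, hκ, fun b hb => le_trans ?_ (hle b hb)⟩
  exact le_mul_of_one_le_right hκ.le (Real.one_le_exp (by positivity))

theorem HasExpMoments.levyM_two_pos (hμ : HasExpMoments μ) (hμinf : μ (Ioi 0) = ⊤) {b : ℝ}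
    (hb : 0 ≤ b) : 0 < levyM μ 2 b := by
  obtain ⟨κ, hκ, hle⟩ := hμ.exists_pos_le_levyM_two hμinf
  exact hκ.trans_le (hle b hb)

theorem HasExpMoments.exists_levyM_two_le_mul (hμ : HasExpMoments μ) (hμinf : μ (Ioi 0) = ⊤) :
    ∃ A > 0, ∀ a b, 0 ≤ a → a ≤ b → levyM μ 2 a ≤ A * levyM μ 2 b := by
  obtain ⟨κ, hκ, hle⟩ := hμ.exists_pos_le_levyM_two hμinf
  have hzero := levyM_even_nonneg even_two μ 0
  refine ⟨1 + levyM μ 2 0 / κ, by positivity, fun a b ha hab => ?_⟩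
  calc levyM μ 2 a ≤ levyM μ 2 b + levyM μ 2 0 / κ * κ := by
        rw [div_mul_cancel₀ _ hκ.ne']
        exact hμ.levyM_le_levyM_add even_two le_rfl ha hab
    _ ≤ levyM μ 2 b + levyM μ 2 0 / κ * levyM μ 2 b := by
        gcongr
        exact hle b (ha.trans hab)
    _ = _ := by ring

theorem HasExpMoments.exists_levyM_four_le_mul (hμ : HasExpMoments μ) (hμinf : μ (Ioi 0) = ⊤)
    {ε : ℝ} (hε : 0 ≤ ε)
    (hle : ∀ᶠ ξ in atTop, levyM μ 4 ξ ≤ Real.exp (ε * ξ) * levyM μ 2 ξ) :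
    ∃ C, 0 ≤ C ∧ ∀ v, 0 ≤ v → levyM μ 4 v ≤ C * (Real.exp (ε * v) * levyM μ 2 v) := by
  obtain ⟨κ, hκ, hκle⟩ := hμ.exists_pos_le_levyM_two hμinf
  obtain ⟨B, hB, hBle⟩ := hμ.exists_levyM_le_add (by decide : Even 4) (by norm_num)
    (fun v _ => mul_nonneg (Real.exp_pos (ε * v)).le (levyM_even_nonneg even_two μ v)) hle
  refine ⟨1 + B / κ, by positivity, fun v hv => (hBle v hv).trans ?_⟩
  have hlower : 1 * κ ≤ Real.exp (ε * v) * levyM μ 2 v := by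
    gcongr
    exacts [Real.one_le_exp (by positivity), hκle v hv]
  calc Real.exp (ε * v) * levyM μ 2 v + B
      = Real.exp (ε * v) * levyM μ 2 v + B / κ * (1 * κ) := by field_simp
    _ ≤ Real.exp (ε * v) * levyM μ 2 v + B / κ * (Real.exp (ε * v) * levyM μ 2 v) := by gcongr
    _ = _ := by ring

theorem HasExpMoments.exists_levyM_four_le_add (hμ : HasExpMoments μ) (hμinf : μ (Ioi 0) = ⊤)
    {γ : ℝ} (hγ : 0 ≤ γ)
    (hT1 : Tendsto (fun ξ => levyM μ 4 ξ / levyM μ 2 (γ * ξ) ^ 2) atTop (𝓝 0))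
    {ε : ℝ} (hε : 0 < ε) :
    ∃ B, ∀ v, 0 ≤ v → levyM μ 4 v ≤ ε * levyM μ 2 (γ * v) ^ 2 + B := by
  have hle : ∀ᶠ ξ in atTop, levyM μ 4 ξ ≤ ε * levyM μ 2 (γ * ξ) ^ 2 := by
    filter_upwards [hT1.eventually (gt_mem_nhds hε), eventually_ge_atTop 0] with ξ hlt hξ
    have := hμ.levyM_two_pos hμinf (mul_nonneg hγ hξ)
    exact ((div_lt_iff₀ (by positivity)).1 hlt).le
  obtain ⟨B, -, hB⟩ := hμ.exists_levyM_le_add (by decide : Even 4) (by norm_num)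
    (fun v _ => by positivity) hle
  exact ⟨B, hB⟩

theorem eventually_le_exp_of_tendsto_log_div {f g : ℝ → ℝ} (hg : Tendsto g atTop atTop)
    (hlog : Tendsto (fun ξ => (Real.log (max (f ξ / g ξ) 1) + Real.log (Real.log (g ξ))) / ξ)
      atTop (𝓝 0)) {ε : ℝ} (hε : 0 < ε) :
    ∀ᶠ ξ in atTop, f ξ ≤ Real.exp (ε * ξ) * g ξ ∧ g ξ ≤ Real.exp (Real.exp (ε * ξ)) := by
  filter_upwards [hlog.eventually (gt_mem_nhds hε), eventually_gt_atTop 0,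
    hg.eventually_ge_atTop (Real.exp 1)] with ξ hlt hξ hgξ
  rw [div_lt_iff₀ hξ] at hlt
  have hgpos : 0 < g ξ := (Real.exp_pos 1).trans_le hgξ
  have hlogg : 1 ≤ Real.log (g ξ) := (Real.le_log_iff_exp_le hgpos).2 hgξ
  have hloglog : 0 ≤ Real.log (Real.log (g ξ)) := Real.log_nonneg hlogg
  have hlogmax : 0 ≤ Real.log (max (f ξ / g ξ) 1) := Real.log_nonneg (le_max_right _ _)
  constructor
  · have hmax : max (f ξ / g ξ) 1 ≤ Real.exp (ε * ξ) :=
      (Real.log_le_iff_le_exp (by positivity)).1 (by linarith)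
    exact (div_le_iff₀ hgpos).1 ((le_max_left _ _).trans hmax)
  · exact (Real.log_le_iff_le_exp hgpos).1
      ((Real.log_le_iff_le_exp (one_pos.trans_le hlogg)).1 (by linarith))

end LevyMeasure

section OrnsteinUhlenbeck

/-- The Lévy measure of the stationary Ornstein–Uhlenbeck variable `∫_{-∞}^0 e^{λs} dZ_s`. -/
noncomputable abbrev ouMeasure (μ : Measure ℝ) (lam : ℝ) : Measure ℝ :=
  kernelMeasure μ (Iic 0) fun s => Real.exp (lam * s)

variable {μ : Measure ℝ} {lam : ℝ}

theorem measurable_exp_mul (lam : ℝ) : Measurable fun s : ℝ => Real.exp (lam * s) := by fun_prop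

theorem integrableOn_exp_mul_pow (hlam : 0 < lam) {k : ℕ} (hk : k ≠ 0) :
    IntegrableOn (fun s => Real.exp (lam * s) ^ k) (Iic 0) := by
  simpa only [← Real.exp_nat_mul, ← mul_assoc]
    using integrableOn_exp_mul_Iic (a := k * lam) (by positivity) 0

theorem HasExpMoments.ouMeasure [SFinite μ] (hμ : HasExpMoments μ) (hlam : 0 < lam) :
    HasExpMoments (ouMeasure μ lam) := by
  refine hμ.kernelMeasure (B := 1) (measurable_exp_mul lam) measurableSet_Iic (fun s hs => ?_)
    (integrableOn_exp_mul_pow hlam two_ne_zero)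
  rw [Real.abs_exp, Real.exp_le_one_iff]
  exact mul_nonpos_of_nonneg_of_nonpos hlam.le hs

theorem hasDerivAt_add_one_sub_sin_mul_exp (hlam : lam ≠ 0) {w : ℝ} (hw : w ≠ 0) (s : ℝ) :
    HasDerivAt
      (fun s => s + (1 - Real.sin (w * Real.exp (lam * s))) * (Real.exp (-(lam * s)) / (lam * w)))
      (1 - Real.cos (w * Real.exp (lam * s))
        - (1 - Real.sin (w * Real.exp (lam * s))) * (Real.exp (-(lam * s)) / w)) s := by
  have hlin : HasDerivAt (fun s : ℝ => lam * s) lam s := by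
    simpa using (hasDerivAt_id s).const_mul lam
  have hsin := ((hlin.exp.const_mul w).sin.const_sub 1)
  have hexp := hlin.fun_neg.exp.div_const (lam * w)
  refine ((hasDerivAt_id s).add (hsin.mul hexp)).congr_deriv ?_
  rw [Real.exp_neg]
  field_simp
  ring

-- The corrector `(1 - sin (w e^{λs})) e^{-λs} / (λw)` replaces `1 - cos (w e^{λs})` by `1` up to a
-- signed error, so that only boundary terms have to be bounded.
theorem sub_le_integral_one_sub_cos (hlam : 0 < lam) {w b : ℝ} (hw : w ≠ 0) (hb : 0 ≤ b) :
    b - 2 * Real.exp (lam * b) / (lam * |w|)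
      ≤ ∫ s in (-b)..0, (1 - Real.cos (w * Real.exp (lam * s))) := by
  have hw' : 0 < |w| := abs_pos.2 hw
  have hcos : ∀ s, Real.cos (w * Real.exp (lam * s)) = Real.cos (|w| * Real.exp (lam * s)) :=
    fun s => by rw [← Real.cos_abs, abs_mul, Real.abs_exp]
  have hsin : ∀ x, 0 ≤ 1 - Real.sin x := fun x => by linarith [Real.sin_le_one x]
  have hderiv := hasDerivAt_add_one_sub_sin_mul_exp hlam.ne' hw'.ne'
  simp only [hcos]
  refine le_trans ?_ (intervalIntegral.sub_le_integral_of_hasDeriv_right_of_le (neg_nonpos.2 hb)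
    (fun s _ => (hderiv s).continuousAt.continuousWithinAt)
    (fun s _ => (hderiv s).hasDerivWithinAt)
    (Continuous.integrableOn_Icc (by fun_prop))
    (fun s _ => sub_le_self _ (mul_nonneg (hsin _) (by positivity))))
  have hright : 0 ≤ (1 - Real.sin (|w| * Real.exp (lam * 0)))
      * (Real.exp (-(lam * 0)) / (lam * |w|)) := mul_nonneg (hsin _) (by positivity)
  have hleft : (1 - Real.sin (|w| * Real.exp (lam * -b))) * (Real.exp (-(lam * -b)) / (lam * |w|))
      ≤ 2 * (Real.exp (lam * b) / (lam * |w|)) := by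
    rw [mul_neg, neg_neg]
    gcongr
    linarith [Real.neg_one_le_sin (|w| * Real.exp (-(lam * b)))]
  rw [mul_div_assoc]
  linarith

theorem intervalIntegrable_one_sub_cos_mul_exp (lam w a b : ℝ) :
    IntervalIntegrable (fun s => 1 - Real.cos (w * Real.exp (lam * s))) volume a b :=
  Continuous.intervalIntegrable (by fun_prop) a b

theorem mul_sq_le_integral_one_sub_cos (hlam : 0 < lam) {w : ℝ} (hw : |w| ≤ 4 * Real.exp 1) :
    2 * Real.exp (-6) / (Real.pi ^ 2 * lam) * w ^ 2
      ≤ ∫ s in (-(3 / lam))..(-(2 / lam)), (1 - Real.cos (w * Real.exp (lam * s))) := by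
  have hle : -(3 / lam) ≤ -(2 / lam) := by gcongr; norm_num
  have hpoint : ∀ s ∈ Icc (-(3 / lam)) (-(2 / lam)),
      2 / Real.pi ^ 2 * (w ^ 2 * Real.exp (-6)) ≤ 1 - Real.cos (w * Real.exp (lam * s)) := by
    intro s hs
    have hlower : -3 ≤ lam * s := by
      simpa [mul_div_cancel₀ _ hlam.ne'] using mul_le_mul_of_nonneg_left hs.1 hlam.le
    have hupper : lam * s ≤ -2 := by
      simpa [mul_div_cancel₀ _ hlam.ne'] using mul_le_mul_of_nonneg_left hs.2 hlam.le
    have habs : |w * Real.exp (lam * s)| ≤ Real.pi := by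
      rw [abs_mul, Real.abs_exp]
      calc |w| * Real.exp (lam * s) ≤ 4 * Real.exp 1 * Real.exp (-2) := by gcongr
        _ = 4 * Real.exp (-1) := by rw [mul_assoc, ← Real.exp_add]; norm_num
        _ ≤ Real.pi := by linarith [Real.exp_neg_one_lt_half, Real.pi_gt_three]
    have hsq : w ^ 2 * Real.exp (-6) ≤ (w * Real.exp (lam * s)) ^ 2 := by
      rw [mul_pow, ← Real.exp_nat_mul]
      gcongr
      push_cast
      linarith
    calc 2 / Real.pi ^ 2 * (w ^ 2 * Real.exp (-6))
        ≤ 2 / Real.pi ^ 2 * (w * Real.exp (lam * s)) ^ 2 := by gcongr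
      _ ≤ _ := by linarith [Real.cos_le_one_sub_mul_cos_sq habs]
  calc 2 * Real.exp (-6) / (Real.pi ^ 2 * lam) * w ^ 2
      = ∫ _ in (-(3 / lam))..(-(2 / lam)), 2 / Real.pi ^ 2 * (w ^ 2 * Real.exp (-6)) := by
        rw [intervalIntegral.integral_const, smul_eq_mul]
        field_simp
        ring
    _ ≤ _ := intervalIntegral.integral_mono_on hle (by simp)
        (intervalIntegrable_one_sub_cos_mul_exp lam w _ _) hpoint

theorem exists_mul_min_sq_le_integral_one_sub_cos (hlam : 0 < lam) :
    ∃ c > 0, ∀ w : ℝ, c * min 1 (w ^ 2)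
      ≤ ∫ s in (-(3 / lam))..0, (1 - Real.cos (w * Real.exp (lam * s))) := by
  have hmono : ∀ w {a b : ℝ}, -(3 / lam) ≤ a → a ≤ b → b ≤ 0 →
      ∫ s in a..b, (1 - Real.cos (w * Real.exp (lam * s)))
        ≤ ∫ s in (-(3 / lam))..0, (1 - Real.cos (w * Real.exp (lam * s))) := fun w _ _ ha hab hb =>
    intervalIntegral.integral_mono_interval ha hab hb
      (Eventually.of_forall fun s => one_sub_cos_nonneg _)
      (intervalIntegrable_one_sub_cos_mul_exp lam w _ _)
  refine ⟨min (1 / (2 * lam)) (2 * Real.exp (-6) / (Real.pi ^ 2 * lam)), by positivity,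
    fun w => ?_⟩
  rcases le_total |w| (4 * Real.exp 1) with hsmall | hlarge
  · refine le_trans ?_ ((mul_sq_le_integral_one_sub_cos hlam hsmall).trans
      (hmono w le_rfl ?_ ?_))
    · gcongr
      exacts [min_le_right _ _, min_le_right _ _]
    · gcongr
      norm_num
    · exact neg_nonpos.2 (by positivity)
  · have hw : 0 < |w| := lt_of_lt_of_le (by positivity) hlarge
    refine le_trans ?_ ((sub_le_integral_one_sub_cos hlam (b := 1 / lam) (abs_pos.1 hw)
      (by positivity)).trans (hmono w ?_ ?_ le_rfl))
    · have hboundary : 2 * Real.exp 1 / |w| ≤ 1 / 2 := by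
        rw [div_le_div_iff₀ hw two_pos]
        linarith
      calc _ ≤ 1 / (2 * lam) * 1 := by
            gcongr
            exacts [min_le_left _ _, min_le_left _ _]
        _ = (1 - 1 / 2) / lam := by ring
        _ ≤ (1 - 2 * Real.exp 1 / |w|) / lam := by gcongr
        _ = _ := by
            rw [mul_one_div_cancel hlam.ne']
            field_simp
    · gcongr
      norm_num
    · exact neg_nonpos.2 (by positivity)

variable [SFinite μ]

theorem exists_le_tiltedDamping_ouMeasure (hμ : HasExpMoments μ) (hμinf : μ (Ioi 0) = ⊤)
    (hlam : 0 < lam) :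
    ∃ c > 0, ∃ δ > 0, ∀ ζ, 0 ≤ ζ → ∀ y,
      c * Real.exp (δ * ζ) * min 1 (y ^ 2) ≤ tiltedDamping (ouMeasure μ lam) ζ y := by
  obtain ⟨δ, hδ, hδ1, hmass⟩ := hμ.exists_le_measureReal_Ioi hμinf 1
  obtain ⟨c, hc, hcos⟩ := exists_mul_min_sq_le_integral_one_sub_cos hlam
  have : 0 < μ.real (Ioi δ) := one_pos.trans_le hmass
  refine ⟨μ.real (Ioi δ) * (c * δ ^ 2), by positivity, Real.exp (-3) * δ, by positivity,
    fun ζ hζ y => ?_⟩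
  refine le_trans (le_of_eq ?_) (measureReal_mul_exp_mul_le_tiltedDamping (measurable_exp_mul lam)
    (hμ.ouMeasure hlam) (J := Ioc (-(3 / lam)) 0) (L := c * (δ ^ 2 * min 1 (y ^ 2)))
    measurableSet_Ioc Ioc_subset_Iic_self (Real.exp_pos (-3)).le (fun s hs => ?_) hδ.le
    (hμ.measure_Ioi_ne_top hδ) hζ fun u hu => ?_)
  · ring
  · gcongr
    simpa [mul_div_cancel₀ _ hlam.ne'] using mul_le_mul_of_nonneg_left hs.1.le hlam.le
  · rw [← intervalIntegral.integral_of_le (neg_nonpos.2 (by positivity))]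
    refine le_trans ?_ (hcos (y * u))
    gcongr
    refine le_min ?_ ?_
    · exact mul_le_one₀ (pow_le_one₀ hδ.le hδ1) (by positivity) (min_le_left _ _)
    · rw [mul_pow, mul_comm (y ^ 2)]
      gcongr
      exact min_le_right _ _

theorem measureReal_mul_log_le_tiltedDamping_ouMeasure (hμ : HasExpMoments μ) (hlam : 0 < lam)
    {δ y ζ : ℝ} (hδ : 0 < δ) (hy : 1 ≤ |y| * δ) (hζ : 0 ≤ ζ) :
    μ.real (Ioi δ) * ((Real.log (|y| * δ) - 2) / lam) ≤ tiltedDamping (ouMeasure μ lam) ζ y := by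
  have hb : 0 ≤ Real.log (|y| * δ) / lam := div_nonneg (Real.log_nonneg hy) hlam.le
  have hy0 : 0 < |y| := pos_of_mul_pos_left (one_pos.trans_le hy) hδ.le
  refine le_trans (le_of_eq ?_) (measureReal_mul_exp_mul_le_tiltedDamping (measurable_exp_mul lam)
    (hμ.ouMeasure hlam) (J := Ioc (-(Real.log (|y| * δ) / lam)) 0) (a := 0)
    (L := (Real.log (|y| * δ) - 2) / lam)
    measurableSet_Ioc Ioc_subset_Iic_self le_rfl (fun s _ => (Real.exp_pos _).le) hδ.le
    (hμ.measure_Ioi_ne_top hδ) hζ fun u hu => ?_)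
  · simp
  · have hu0 : 0 < u := hδ.trans hu
    rw [← intervalIntegral.integral_of_le (neg_nonpos.2 hb)]
    refine le_trans ?_ (sub_le_integral_one_sub_cos hlam
      (mul_ne_zero (abs_pos.1 hy0) hu0.ne') hb)
    rw [mul_div_cancel₀ _ hlam.ne', Real.exp_log (by positivity), abs_mul, abs_of_pos hu0, sub_div]
    refine sub_le_sub_left ?_ _
    rw [div_le_div_iff₀ (by positivity) hlam]
    calc 2 * (|y| * δ) * lam ≤ 2 * (|y| * u) * lam := by gcongr
      _ = _ := by ring

theorem exp_neg_tiltedDamping_ouMeasure_mul_le (hμ : HasExpMoments μ) (hlam : 0 < lam)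
    {δ ζ : ℝ} {N : ℕ} (hδ : 0 < δ) (hN : 2 * N * lam ≤ μ.real (Ioi δ)) (hζ : 0 ≤ ζ) (y : ℝ) :
    Real.exp (-tiltedDamping (ouMeasure μ lam) ζ y) * max 1 ((y * δ) ^ 2) ^ N
      ≤ Real.exp (2 * μ.real (Ioi δ) / lam) := by
  have habs : (y * δ) ^ 2 = (|y| * δ) ^ 2 := by rw [mul_pow, mul_pow, sq_abs]
  rw [habs]
  rcases le_total (|y| * δ) 1 with hy | hy
  · rw [max_eq_left (pow_le_one₀ (by positivity) hy), one_pow, mul_one]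
    exact Real.exp_le_exp.2
      ((neg_nonpos.2 (tiltedDamping_nonneg _ ζ y)).trans (by positivity))
  · have hpow : ((|y| * δ) ^ 2) ^ N = Real.exp (2 * N * Real.log (|y| * δ)) := by
      rw [← pow_mul, ← Real.exp_log (one_pos.trans_le hy), ← Real.exp_nat_mul, Real.log_exp]
      push_cast
      ring_nf
    have hslope : 2 * N * Real.log (|y| * δ) ≤ μ.real (Ioi δ) / lam * Real.log (|y| * δ) :=
      mul_le_mul_of_nonneg_right ((le_div_iff₀ hlam).2 hN) (Real.log_nonneg hy)
    rw [max_eq_right (one_le_pow₀ hy), hpow, ← Real.exp_add, Real.exp_le_exp]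
    calc _ ≤ -(μ.real (Ioi δ) * ((Real.log (|y| * δ) - 2) / lam))
          + μ.real (Ioi δ) / lam * Real.log (|y| * δ) := by
          gcongr
          exact measureReal_mul_log_le_tiltedDamping_ouMeasure hμ hlam hδ hy hζ
      _ = _ := by ring

theorem hasUniformRapidDecay_ouMeasure (hμ : HasExpMoments μ) (hμinf : μ (Ioi 0) = ⊤)
    (hlam : 0 < lam) : HasUniformRapidDecay (ouMeasure μ lam) := by
  intro N
  obtain ⟨δ, hδ, -, hN⟩ := hμ.exists_le_measureReal_Ioi hμinf (2 * N * lam)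
  refine ⟨(1 + (δ ^ 2)⁻¹) ^ N * Real.exp (2 * μ.real (Ioi δ) / lam), fun ζ hζ y => ?_⟩
  have hle : 1 + y ^ 2 ≤ (1 + (δ ^ 2)⁻¹) * max 1 ((y * δ) ^ 2) := by
    calc 1 + y ^ 2 = 1 + (δ ^ 2)⁻¹ * (y * δ) ^ 2 := by field_simp
      _ ≤ max 1 ((y * δ) ^ 2) + (δ ^ 2)⁻¹ * max 1 ((y * δ) ^ 2) := by
          gcongr
          exacts [le_max_left _ _, le_max_right _ _]
      _ = _ := by ring
  rw [← div_eq_mul_inv, le_div_iff₀ (by positivity)]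
  calc _ ≤ Real.exp (-tiltedDamping (ouMeasure μ lam) ζ y)
        * ((1 + (δ ^ 2)⁻¹) * max 1 ((y * δ) ^ 2)) ^ N := by gcongr
    _ = (1 + (δ ^ 2)⁻¹) ^ N * (Real.exp (-tiltedDamping (ouMeasure μ lam) ζ y)
        * max 1 ((y * δ) ^ 2) ^ N) := by
        rw [mul_pow]
        ring
    _ ≤ _ := by
        gcongr
        exact exp_neg_tiltedDamping_ouMeasure_mul_le hμ hlam hδ hN hζ y

theorem ouMeasure_Ioi_eq_top (hμinf : μ (Ioi 0) = ⊤) : ouMeasure μ lam (Ioi 0) = ⊤ := by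
  have hpreimage : (fun q : ℝ × ℝ => Real.exp (lam * q.1) * q.2) ⁻¹' Ioi 0 = univ ×ˢ Ioi 0 := by
    ext q
    simp [Real.exp_pos]
  rw [ouMeasure, kernelMeasure, Measure.map_apply (by fun_prop) measurableSet_Ioi, hpreimage,
    Measure.prod_prod, hμinf]
  simp

theorem levyM_ouMeasure (hμ : HasExpMoments μ) (hlam : 0 < lam) (k : ℕ) (ζ : ℝ) :
    levyM (ouMeasure μ lam) k ζ
      = ∫ s in Iic 0, Real.exp (lam * s) ^ k * levyM μ k (Real.exp (lam * s) * ζ) :=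
  (kernelM_eq_levyM (measurable_exp_mul lam) (hμ.ouMeasure hlam) k ζ).symm

theorem integrableOn_exp_mul_pow_mul_levyM (hμ : HasExpMoments μ) (hlam : 0 < lam) (k : ℕ)
    (ζ : ℝ) :
    IntegrableOn (fun s => Real.exp (lam * s) ^ k * levyM μ k (Real.exp (lam * s) * ζ)) (Iic 0) :=
  integrableOn_pow_mul_levyM (measurable_exp_mul lam) (hμ.ouMeasure hlam) k ζ

theorem mul_exp_le_exp_of_sub_le (hlam : 0 < lam) {γ s t : ℝ} (hγ : 0 < γ)
    (hst : s - -Real.log γ / lam ≤ t) : γ * Real.exp (lam * s) ≤ Real.exp (lam * t) := by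
  nth_rewrite 1 [← Real.exp_log hγ]
  rw [← Real.exp_add, Real.exp_le_exp]
  calc Real.log γ + lam * s = lam * (s - -Real.log γ / lam) := by field_simp; ring
    _ ≤ lam * t := mul_le_mul_of_nonneg_left hst hlam.le

-- The window `[s - log (1/γ) / λ, s]` alone contributes this much to the integral over `(-∞, 0]`.
theorem exists_mul_levyM_two_le_levyM_ouMeasure (hμ : HasExpMoments μ) (hμinf : μ (Ioi 0) = ⊤)
    (hlam : 0 < lam) {γ : ℝ} (hγ : γ ∈ Ioo (0 : ℝ) 1) :
    ∃ c > 0, ∀ s ≤ 0, ∀ ζ, 0 ≤ ζ →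
      c * (Real.exp (lam * s) ^ 2 * levyM μ 2 (γ * (Real.exp (lam * s) * ζ)))
        ≤ levyM (ouMeasure μ lam) 2 ζ := by
  obtain ⟨A, hA, hmono⟩ := hμ.exists_levyM_two_le_mul hμinf
  obtain ⟨hγ0, hγ1⟩ := hγ
  set a : ℝ := -Real.log γ / lam
  have ha : 0 < a := div_pos (neg_pos.2 (Real.log_neg hγ0 hγ1)) hlam
  refine ⟨a * γ ^ 2 / A, by positivity, fun s hs ζ hζ => ?_⟩
  have hint := integrableOn_exp_mul_pow_mul_levyM hμ hlam 2 ζ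
  have hsub : Icc (s - a) s ⊆ Iic 0 := fun t ht => ht.2.trans hs
  have hpoint : ∀ t ∈ Icc (s - a) s,
      (γ * Real.exp (lam * s)) ^ 2 * (levyM μ 2 (γ * (Real.exp (lam * s) * ζ)) / A)
        ≤ Real.exp (lam * t) ^ 2 * levyM μ 2 (Real.exp (lam * t) * ζ) := by
    intro t ht
    have hexp := mul_exp_le_exp_of_sub_le hlam hγ0 ht.1
    have hM : levyM μ 2 (γ * (Real.exp (lam * s) * ζ)) / A
        ≤ levyM μ 2 (Real.exp (lam * t) * ζ) := by
      rw [div_le_iff₀' hA, ← mul_assoc]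
      exact hmono _ _ (by positivity) (by gcongr)
    have := levyM_even_nonneg even_two μ (γ * (Real.exp (lam * s) * ζ))
    gcongr
  rw [levyM_ouMeasure hμ hlam]
  calc _ = ∫ _ in Icc (s - a) s,
          (γ * Real.exp (lam * s)) ^ 2 * (levyM μ 2 (γ * (Real.exp (lam * s) * ζ)) / A) := by
        rw [setIntegral_const, smul_eq_mul, Real.volume_real_Icc_of_le (by linarith)]
        ring
    _ ≤ ∫ t in Icc (s - a) s, Real.exp (lam * t) ^ 2 * levyM μ 2 (Real.exp (lam * t) * ζ) :=
        setIntegral_mono_on (integrableOn_const (by simp)) (hint.mono_set hsub)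
          measurableSet_Icc hpoint
    _ ≤ _ := setIntegral_mono_set hint
        (Eventually.of_forall fun t => mul_nonneg (by positivity) (levyM_even_nonneg even_two μ _))
        (Eventually.of_forall hsub)

theorem exists_levyM_four_ouMeasure_le (hμ : HasExpMoments μ) (hμinf : μ (Ioi 0) = ⊤)
    (hlam : 0 < lam) {γ : ℝ} (hγ : γ ∈ Ioo (0 : ℝ) 1)
    (hT1 : Tendsto (fun ξ => levyM μ 4 ξ / levyM μ 2 (γ * ξ) ^ 2) atTop (𝓝 0)) :
    ∃ D > 0, ∀ ε > 0, ∃ B, ∀ ζ, 0 ≤ ζ →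
      levyM (ouMeasure μ lam) 4 ζ ≤ ε * D * levyM (ouMeasure μ lam) 2 ζ ^ 2 + B := by
  obtain ⟨c, hc, hwindow⟩ := exists_mul_levyM_two_le_levyM_ouMeasure hμ hμinf hlam hγ
  obtain ⟨A, hA, hmono⟩ := hμ.exists_levyM_two_le_mul hμinf
  refine ⟨A / c, by positivity, fun ε hε => ?_⟩
  obtain ⟨B, hle⟩ := hμ.exists_levyM_four_le_add hμinf hγ.1.le hT1 hε
  refine ⟨B * ∫ s in Iic 0, Real.exp (lam * s) ^ 4, fun ζ hζ => ?_⟩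
  set N := levyM (ouMeasure μ lam) 2 ζ with hN
  have hN_nonneg : 0 ≤ N := levyM_even_nonneg even_two _ ζ
  have hint2 := (integrableOn_exp_mul_pow_mul_levyM hμ hlam 2 ζ).const_mul (ε * (A / c) * N)
  have hint4 := (integrableOn_exp_mul_pow hlam four_ne_zero).const_mul B
  have hpoint : ∀ s ∈ Iic (0 : ℝ), Real.exp (lam * s) ^ 4 * levyM μ 4 (Real.exp (lam * s) * ζ)
      ≤ ε * (A / c) * N * (Real.exp (lam * s) ^ 2 * levyM μ 2 (Real.exp (lam * s) * ζ))
        + B * Real.exp (lam * s) ^ 4 := by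
    intro s hs
    have hw := hwindow s hs ζ hζ
    set E := Real.exp (lam * s)
    have : 0 < E := Real.exp_pos _
    have hγ0 := hγ.1
    have hpos := levyM_even_nonneg even_two μ (γ * (E * ζ))
    calc E ^ 4 * levyM μ 4 (E * ζ) ≤ E ^ 4 * (ε * levyM μ 2 (γ * (E * ζ)) ^ 2 + B) := by
          gcongr
          exact hle _ (by positivity)
      _ = ε * (E ^ 2 * levyM μ 2 (γ * (E * ζ)) * (E ^ 2 * levyM μ 2 (γ * (E * ζ))))
          + B * E ^ 4 := by ring
      _ ≤ ε * (N / c * (E ^ 2 * (A * levyM μ 2 (E * ζ)))) + B * E ^ 4 := by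
          gcongr ε * (?_ * (_ * ?_)) + _
          · exact (le_div_iff₀' hc).2 hw
          · exact hmono _ _ (by positivity) (mul_le_of_le_one_left (by positivity) hγ.2.le)
      _ = _ := by ring
  rw [levyM_ouMeasure hμ hlam 4]
  refine (setIntegral_mono_on (integrableOn_exp_mul_pow_mul_levyM hμ hlam 4 ζ)
    (hint2.add hint4) measurableSet_Iic hpoint).trans_eq ?_
  rw [integral_add' hint2 hint4, integral_const_mul, integral_const_mul,
    ← levyM_ouMeasure hμ hlam, ← hN, sq, mul_assoc _ N]

theorem tendsto_kurtosis_ouMeasure (hμ : HasExpMoments μ) (hμinf : μ (Ioi 0) = ⊤)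
    (hlam : 0 < lam) {γ : ℝ} (hγ : γ ∈ Ioo (0 : ℝ) 1)
    (hT1 : Tendsto (fun ξ => levyM μ 4 ξ / levyM μ 2 (γ * ξ) ^ 2) atTop (𝓝 0)) :
    Tendsto (fun ζ => levyM (ouMeasure μ lam) 4 ζ / levyM (ouMeasure μ lam) 2 ζ ^ 2)
      atTop (𝓝 0) := by
  obtain ⟨D, hD, hbound⟩ := exists_levyM_four_ouMeasure_le hμ hμinf hlam hγ hT1
  have htop := (hμ.ouMeasure hlam).tendsto_levyM_two_atTop (ouMeasure_Ioi_eq_top hμinf)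
  refine tendsto_order.2 ⟨fun a ha => Eventually.of_forall fun ζ => ha.trans_le ?_,
    fun a ha => ?_⟩
  · exact div_nonneg (levyM_even_nonneg (by decide) _ ζ) (sq_nonneg _)
  · obtain ⟨B, hle⟩ := hbound (a / 2 / D) (by positivity)
    rw [div_mul_cancel₀ _ hD.ne'] at hle
    filter_upwards [eventually_ge_atTop 0, htop.eventually_gt_atTop 0,
      ((tendsto_pow_atTop two_ne_zero).comp htop).eventually_gt_atTop (B / (a / 2))]
      with ζ hζ hpos hlarge
    rw [Function.comp_apply, div_lt_iff₀' (by positivity)] at hlarge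
    rw [div_lt_iff₀ (by positivity)]
    linarith [hle ζ hζ]

theorem isBigO_levyM_four_ouMeasure (hμ : HasExpMoments μ) (hμinf : μ (Ioi 0) = ⊤)
    (hlam : 0 < lam) {ε : ℝ} (hε : 0 ≤ ε)
    (hle : ∀ᶠ ξ in atTop, levyM μ 4 ξ ≤ Real.exp (ε * ξ) * levyM μ 2 ξ) :
    levyM (ouMeasure μ lam) 4
      =O[atTop] fun ζ => Real.exp (ε * ζ) * levyM (ouMeasure μ lam) 2 ζ := by
  obtain ⟨C, hC, hCle⟩ := hμ.exists_levyM_four_le_mul hμinf hε hle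
  refine IsBigO.of_bound C ?_
  filter_upwards [eventually_ge_atTop 0] with ζ hζ
  have hnonneg := levyM_even_nonneg even_two (ouMeasure μ lam) ζ
  rw [Real.norm_of_nonneg (levyM_even_nonneg (by decide) _ ζ),
    Real.norm_of_nonneg (by positivity), ← mul_assoc, levyM_ouMeasure hμ hlam 4,
    levyM_ouMeasure hμ hlam 2, ← integral_const_mul]
  refine setIntegral_mono_on (integrableOn_exp_mul_pow_mul_levyM hμ hlam 4 ζ)
    ((integrableOn_exp_mul_pow_mul_levyM hμ hlam 2 ζ).const_mul _) measurableSet_Iic fun s hs => ?_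
  have hE1 : Real.exp (lam * s) ≤ 1 :=
    Real.exp_le_one_iff.2 (mul_nonpos_of_nonneg_of_nonpos hlam.le hs)
  set E := Real.exp (lam * s)
  have hE : 0 < E := Real.exp_pos _
  have hM2 := levyM_even_nonneg even_two μ (E * ζ)
  have hM4 := levyM_even_nonneg (by decide : Even 4) μ (E * ζ)
  calc E ^ 4 * levyM μ 4 (E * ζ)
      ≤ E ^ 2 * (C * (Real.exp (ε * (E * ζ)) * levyM μ 2 (E * ζ))) := by
        gcongr ?_ * ?_
        · exact pow_le_pow_of_le_one hE.le hE1 (by norm_num)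
        · exact hCle _ (by positivity)
    _ ≤ E ^ 2 * (C * (Real.exp (ε * ζ) * levyM μ 2 (E * ζ))) := by
        gcongr
        exact mul_le_of_le_one_left hζ hE1
    _ = _ := by ring

theorem isBigO_levyM_two_ouMeasure (hμ : HasExpMoments μ) (hμinf : μ (Ioi 0) = ⊤)
    (hlam : 0 < lam) : levyM (ouMeasure μ lam) 2 =O[atTop] levyM μ 2 := by
  obtain ⟨A, _, hmono⟩ := hμ.exists_levyM_two_le_mul hμinf
  refine IsBigO.of_bound (A * ∫ s in Iic 0, Real.exp (lam * s) ^ 2) ?_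
  filter_upwards [eventually_ge_atTop 0] with ζ hζ
  rw [Real.norm_of_nonneg (levyM_even_nonneg even_two _ ζ),
    Real.norm_of_nonneg (levyM_even_nonneg even_two _ ζ), levyM_ouMeasure hμ hlam,
    mul_right_comm, ← integral_const_mul]
  refine setIntegral_mono_on (integrableOn_exp_mul_pow_mul_levyM hμ hlam 2 ζ)
    ((integrableOn_exp_mul_pow hlam two_ne_zero).const_mul _) measurableSet_Iic fun s hs => ?_
  have hE1 : Real.exp (lam * s) ≤ 1 :=
    Real.exp_le_one_iff.2 (mul_nonpos_of_nonneg_of_nonpos hlam.le hs)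
  rw [mul_comm]
  gcongr
  exact hmono _ _ (by positivity) (mul_le_of_le_one_left hζ hE1)

theorem isSaddlePointRegular_ouMeasure (hμ : HasExpMoments μ) (hμinf : μ (Ioi 0) = ⊤)
    (hlam : 0 < lam) {γ : ℝ} (hγ : γ ∈ Ioo (0 : ℝ) 1)
    (hT1 : Tendsto (fun ξ => levyM μ 4 ξ / levyM μ 2 (γ * ξ) ^ 2) atTop (𝓝 0))
    (hT2 : Tendsto (fun ξ => (Real.log (max (levyM μ 4 ξ / levyM μ 2 ξ) 1)
      + Real.log (Real.log (levyM μ 2 ξ))) / ξ) atTop (𝓝 0)) :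
    IsSaddlePointRegular (ouMeasure μ lam) := by
  have hgrowth := fun {ε : ℝ} (hε : 0 < ε) =>
    eventually_le_exp_of_tendsto_log_div (hμ.tendsto_levyM_two_atTop hμinf) hT2 hε
  exact {
    hasExpMoments := hμ.ouMeasure hlam
    rapidDecay := hasUniformRapidDecay_ouMeasure hμ hμinf hlam
    exists_le_tiltedDamping := exists_le_tiltedDamping_ouMeasure hμ hμinf hlam
    tendsto_kurtosis := tendsto_kurtosis_ouMeasure hμ hμinf hlam hγ hT1
    isBigO_levyM_four := fun ε hε => isBigO_levyM_four_ouMeasure hμ hμinf hlam hε.le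
      ((hgrowth hε).mono fun _ h => h.1)
    isBigO_levyM_two := fun ε hε => (isBigO_levyM_two_ouMeasure hμ hμinf hlam).trans <|
      IsBigO.of_bound' ((hgrowth hε).mono fun ξ h => by
        rw [Real.norm_of_nonneg (levyM_even_nonneg even_two μ ξ), Real.norm_eq_abs, Real.abs_exp]
        exact h.2) }

end OrnsteinUhlenbeck

end LevyOU

/-- Corollary 3.1, statement (3): the invariant distribution density of the
stationary Lévy driven Ornstein–Uhlenbeck process (kernel `f(s) = e^{λs}` on `(−∞,0]`)
is well defined, `C^∞` with bounded derivatives, and satisfies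
`p(x)·√(2π𝓜₂(ζ(x)))·exp(xζ(x) − 𝓜₀(ζ(x))) → 1` as `x → +∞`. -/
theorem OU_invariant_density_asymptotics
    (μ : Measure ℝ)
    (hμ0 : μ {0} = 0)
    (hμint : Integrable (fun u : ℝ => min 1 (u ^ 2)) μ)
    (hμinf : μ (Set.Ioi (0 : ℝ)) = ⊤)
    (hμexp : ∀ C : ℝ, Integrable (fun u : ℝ => Real.exp (C * u)) (μ.restrict {u : ℝ | 1 ≤ |u|}))
    (γ : ℝ) (hγ : γ ∈ Set.Ioo (0 : ℝ) 1)
    (hT1 : Tendsto (fun ξ => levyM μ 4 ξ / (levyM μ 2 (γ * ξ)) ^ 2) atTop (nhds 0))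
    (hT2 : Tendsto
      (fun ξ => (Real.log (max (levyM μ 4 ξ / levyM μ 2 ξ) 1)
        + Real.log (Real.log (levyM μ 2 ξ))) / ξ) atTop (nhds 0))
    (lam : ℝ) (hlam : 0 < lam)
    (ζ : ℝ → ℝ)
    (hζ : ∀ x : ℝ, 0 ≤ x → 0 ≤ ζ x ∧
      kernelM μ (Set.Iic 0) (fun s => Real.exp (lam * s)) 1 (ζ x) = x)
    (p : ℝ → ℝ)
    (hp : ∀ x : ℝ, p x = (1 / (2 * Real.pi)) *
      (∫ z : ℝ, Complex.exp (Complex.I * (x : ℂ) * (z : ℂ)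
        + kernelPsi μ (Set.Iic 0) (fun s => Real.exp (lam * s)) (z : ℂ))).re) :
    (∀ k : ℕ, ∀ x : ℝ, Integrable (fun z : ℝ => (z : ℂ) ^ k *
      Complex.exp (Complex.I * (x : ℂ) * (z : ℂ)
        + kernelPsi μ (Set.Iic 0) (fun s => Real.exp (lam * s)) (z : ℂ))))
    ∧ ContDiff ℝ (⊤ : ℕ∞) p
    ∧ (∀ n : ℕ, ∃ C : ℝ, ∀ x : ℝ, |iteratedDeriv n p x| ≤ C)
    ∧ Tendsto (fun x => p x
        * Real.sqrt (2 * Real.pi * kernelM μ (Set.Iic 0) (fun s => Real.exp (lam * s)) 2 (ζ x))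
        * Real.exp (x * ζ x - kernelM μ (Set.Iic 0) (fun s => Real.exp (lam * s)) 0 (ζ x)))
        atTop (nhds 1) := by
  have : SigmaFinite μ := LevyOU.sigmaFinite_of_integrable_min_sq hμ0 hμint
  have hμ : LevyOU.HasExpMoments μ := LevyOU.hasExpMoments_of_integrable hμint hμexp
  have hf := LevyOU.measurable_exp_mul lam
  have hreg := LevyOU.isSaddlePointRegular_ouMeasure hμ hμinf hlam hγ hT1 hT2
  have hν : LevyOU.HasExpMoments (LevyOU.ouMeasure μ lam) := hreg.hasExpMoments
  simp only [LevyOU.kernelPsi_eq_levyExponent hf hν] at hp ⊢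
  simp only [LevyOU.kernelM_eq_levyM hf hν] at hζ ⊢
  obtain ⟨hsmooth, hbounded⟩ :=
    LevyOU.contDiff_and_bounded_iteratedDeriv_density hν hreg.rapidDecay hp
  exact ⟨LevyOU.integrable_pow_mul_cexp_levyExponent hν hreg.rapidDecay, hsmooth, hbounded,
    hreg.tendsto_density_mul ((eventually_ge_atTop 0).mono hζ) hp⟩
end
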